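/- There exist absolute constants C₀ > 0 and c > 0 such that for every prime p and every finite symmetric generating set A of SL₂(F_p) with |A| ≥ C₀, either A³ = SL₂(F_p) or |A³| ≥ c·|A|^(1+1/20). -/

import Mathlib

open Pointwise

instance (p : ℕ) : DecidableEq (Matrix.SpecialLinearGroup (Fin 2) (ZMod p)) := by
  unfold Matrix.SpecialLinearGroup
  infer_instance

namespace GrowthSL

/-- The group `SL₂(F)`. -/
abbrev S2 (F : Type*) [CommRing F] := Matrix.SpecialLinearGroup (Fin 2) F

section algebra
variable {F : Type*} [Field F]

/-- The trace. -/
def tr (g : S2 F) : F := g.1 0 0 + g.1 1 1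

/-- `Inc g x y` says that `g x` and `y` are parallel vectors. -/
def Inc (g : S2 F) (x y : F × F) : Prop :=
  (g.1 0 0 * x.1 + g.1 0 1 * x.2) * y.2 - (g.1 1 0 * x.1 + g.1 1 1 * x.2) * y.1 = 0

/-- Parallel vectors. -/
def Par (x y : F × F) : Prop := x.1 * y.2 - x.2 * y.1 = 0

lemma mul_can {a b : F} (ha : a ≠ 0) (h : a * b = 0) : b = 0 :=
  (mul_eq_zero.1 h).resolve_left ha

lemma det1 (g : S2 F) : g.1 0 0 * g.1 1 1 - g.1 0 1 * g.1 1 0 = 1 := by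
  have := g.2
  rwa [Matrix.det_fin_two] at this

lemma ext4 {g h : S2 F} (h00 : g.1 0 0 = h.1 0 0) (h01 : g.1 0 1 = h.1 0 1)
    (h10 : g.1 1 0 = h.1 1 0) (h11 : g.1 1 1 = h.1 1 1) : g = h := by
  apply Subtype.ext
  ext i j
  fin_cases i <;> fin_cases j <;> assumption

lemma mul00 (g h : S2 F) : (g * h).1 0 0 = g.1 0 0 * h.1 0 0 + g.1 0 1 * h.1 1 0 := by
  change (g.1 * h.1) 0 0 = _
  rw [Matrix.mul_apply, Fin.sum_univ_two]
lemma mul01 (g h : S2 F) : (g * h).1 0 1 = g.1 0 0 * h.1 0 1 + g.1 0 1 * h.1 1 1 := by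
  change (g.1 * h.1) 0 1 = _
  rw [Matrix.mul_apply, Fin.sum_univ_two]
lemma mul10 (g h : S2 F) : (g * h).1 1 0 = g.1 1 0 * h.1 0 0 + g.1 1 1 * h.1 1 0 := by
  change (g.1 * h.1) 1 0 = _
  rw [Matrix.mul_apply, Fin.sum_univ_two]
lemma mul11 (g h : S2 F) : (g * h).1 1 1 = g.1 1 0 * h.1 0 1 + g.1 1 1 * h.1 1 1 := by
  change (g.1 * h.1) 1 1 = _
  rw [Matrix.mul_apply, Fin.sum_univ_two]
lemma inv00 (g : S2 F) : (g⁻¹).1 0 0 = g.1 1 1 := by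
  rw [Matrix.SpecialLinearGroup.SL2_inv_expl]; rfl
lemma inv01 (g : S2 F) : (g⁻¹).1 0 1 = - g.1 0 1 := by
  rw [Matrix.SpecialLinearGroup.SL2_inv_expl]; rfl
lemma inv10 (g : S2 F) : (g⁻¹).1 1 0 = - g.1 1 0 := by
  rw [Matrix.SpecialLinearGroup.SL2_inv_expl]; rfl
lemma inv11 (g : S2 F) : (g⁻¹).1 1 1 = g.1 0 0 := by
  rw [Matrix.SpecialLinearGroup.SL2_inv_expl]; rfl
lemma one00 : (1 : S2 F).1 0 0 = 1 := rfl
lemma one01 : (1 : S2 F).1 0 1 = 0 := rfl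
lemma one10 : (1 : S2 F).1 1 0 = 0 := rfl
lemma one11 : (1 : S2 F).1 1 1 = 1 := rfl
lemma neg00 (g : S2 F) : (-g).1 0 0 = - g.1 0 0 := rfl
lemma neg01 (g : S2 F) : (-g).1 0 1 = - g.1 0 1 := rfl
lemma neg10 (g : S2 F) : (-g).1 1 0 = - g.1 1 0 := rfl
lemma neg11 (g : S2 F) : (-g).1 1 1 = - g.1 1 1 := rfl

lemma tr_conj (g h : S2 F) : tr (g * h * g⁻¹) = tr h := by
  have := det1 g
  simp only [tr, mul00, mul01, mul10, mul11, inv00, inv01, inv10, inv11]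
  linear_combination (h.1 0 0 + h.1 1 1) * this

lemma pair_ne {x : F × F} (hx : x ≠ 0) : x.1 ≠ 0 ∨ x.2 ≠ 0 := by
  by_contra! h
  exact hx (Prod.ext h.1 h.2)

lemma inc_one {x y : F × F} : Inc 1 x y ↔ Par x y := by
  simp only [Inc, Par, one00, one01, one10, one11]
  ring_nf

lemma par_symm {x y : F × F} (h : Par x y) : Par y x := by
  unfold Par at *; linear_combination -h

lemma par_refl (x : F × F) : Par x x := by
  unfold Par; ring

lemma inc_mul {g h : S2 F} {x y z : F × F} (hy : y ≠ 0) (h1 : Inc h x y) (h2 : Inc g y z) :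
    Inc (g * h) x z := by
  simp only [Inc, mul00, mul01, mul10, mul11] at *
  rcases pair_ne hy with h0 | h0
  · refine (mul_eq_zero.1 (?_ : y.1 * _ = 0)).resolve_left h0
    linear_combination (h.1 0 0 * x.1 + h.1 0 1 * x.2) * h2 - (g.1 0 1 * z.2 - g.1 1 1 * z.1) * h1
  · refine (mul_eq_zero.1 (?_ : y.2 * _ = 0)).resolve_left h0
    linear_combination (h.1 1 0 * x.1 + h.1 1 1 * x.2) * h2 + (g.1 0 0 * z.2 - g.1 1 0 * z.1) * h1

lemma inc_inv {g : S2 F} {x y : F × F} (h : Inc g x y) : Inc g⁻¹ y x := by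
  simp only [Inc, inv00, inv01, inv10, inv11] at *
  linear_combination -h

lemma inc_par_right {g : S2 F} {x y z : F × F} (hy : y ≠ 0) (h : Inc g x y) (h2 : Par y z) :
    Inc g x z := by
  have := inc_mul hy h (inc_one.2 h2)
  rwa [one_mul] at this

lemma inc_par_left {g : S2 F} {x y z : F × F} (hy : y ≠ 0) (h2 : Par x y) (h : Inc g y z) :
    Inc g x z := by
  have := inc_mul hy (inc_one.2 h2) h
  rwa [mul_one] at this

/-- The image vector. -/
def app (g : S2 F) (x : F × F) : F × F :=
  (g.1 0 0 * x.1 + g.1 0 1 * x.2, g.1 1 0 * x.1 + g.1 1 1 * x.2)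

lemma inc_app (g : S2 F) (x : F × F) : Inc g x (app g x) := by
  simp only [Inc, app]; ring

lemma app_ne {g : S2 F} {x : F × F} (hx : x ≠ 0) : app g x ≠ 0 := by
  intro h
  have h1 : g.1 0 0 * x.1 + g.1 0 1 * x.2 = 0 := congrArg Prod.fst h
  have h2 : g.1 1 0 * x.1 + g.1 1 1 * x.2 = 0 := congrArg Prod.snd h
  have := det1 g
  apply hx
  refine Prod.ext ?_ ?_
  · change x.1 = 0
    linear_combination g.1 1 1 * h1 - g.1 0 1 * h2 - x.1 * this
  · change x.2 = 0
    linear_combination g.1 0 0 * h2 - g.1 1 0 * h1 - x.2 * this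

lemma inc_unique {g : S2 F} {x y z : F × F} (hx : x ≠ 0) (h1 : Inc g x y) (h2 : Inc g x z) :
    Par y z := by
  have := inc_mul hx (inc_inv h1) h2
  rw [mul_inv_cancel] at this
  exact inc_one.1 this

lemma ne_of_not_par_left {x y : F × F} (h : ¬ Par x y) : x ≠ 0 := by
  rintro rfl; apply h; simp [Par]

lemma ne_of_not_par_right {x y : F × F} (h : ¬ Par x y) : y ≠ 0 := by
  rintro rfl; apply h; simp [Par]

lemma eq_pm_of_scalar {g : S2 F} (h01 : g.1 0 1 = 0) (h10 : g.1 1 0 = 0)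
    (h : g.1 0 0 = g.1 1 1) : g = 1 ∨ g = -1 := by
  have hd := det1 g
  have : (g.1 0 0 - 1) * (g.1 0 0 + 1) = 0 := by
    rw [h01, ← h] at hd
    linear_combination hd
  rcases mul_eq_zero.1 this with h' | h'
  · left
    have h' := sub_eq_zero.1 h'
    exact ext4 h' h01 h10 (h ▸ h')
  · right
    have h' := eq_neg_of_add_eq_zero_left h'
    refine ext4 ?_ ?_ ?_ ?_
    · rw [neg00, one00, h']
    · rw [neg01, one01, h01, neg_zero]
    · rw [neg10, one10, h10, neg_zero]
    · rw [neg11, one11, ← h, h']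

lemma three_fix {g : S2 F} {x y z : F × F} (hxy : ¬ Par x y) (hyz : ¬ Par y z) (hzx : ¬ Par z x)
    (hx : Inc g x x) (hy : Inc g y y) (hz : Inc g z z) : g = 1 ∨ g = -1 := by
  simp only [Inc, Par] at *
  have hP : (x.1 * y.2 - x.2 * y.1) * (y.1 * z.2 - y.2 * z.1) * (z.1 * x.2 - z.2 * x.1) ≠ 0 :=
    mul_ne_zero (mul_ne_zero hxy hyz) hzx
  apply eq_pm_of_scalar
  · refine mul_can hP ?_
    linear_combination (-1 : F) * ((- y.1 * z.1 * (y.2 * z.1 - y.1 * z.2)) * hx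
      - (z.1 * x.1 * (z.2 * x.1 - z.1 * x.2)) * hy - (x.1 * y.1 * (x.2 * y.1 - x.1 * y.2)) * hz)
  · refine mul_can hP ?_
    linear_combination (-1 : F) * ((y.2 * z.2 * (y.2 * z.1 - y.1 * z.2)) * hx
      + (z.2 * x.2 * (z.2 * x.1 - z.1 * x.2)) * hy + (x.2 * y.2 * (x.2 * y.1 - x.1 * y.2)) * hz)
  · refine sub_eq_zero.1 (mul_can hP ?_)
    linear_combination (-1 : F) * ((y.2 ^ 2 * z.1 ^ 2 - y.1 ^ 2 * z.2 ^ 2) * hx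
      + (z.2 ^ 2 * x.1 ^ 2 - z.1 ^ 2 * x.2 ^ 2) * hy + (x.2 ^ 2 * y.1 ^ 2 - x.1 ^ 2 * y.2 ^ 2) * hz)

lemma tr_one : tr (1 : S2 F) = 2 := by simp only [tr, one00, one11]; norm_num
lemma tr_neg_one : tr (-1 : S2 F) = -2 := by
  simp only [tr, neg00, neg11, one00, one11]; norm_num

/-- elements commuting with a non-scalar matrix -/
lemma comm_form {h k : S2 F} (h1 : tr h ≠ 2) (h2 : tr h ≠ -2) (hc : k * h = h * k) :
    ∃ α β : F, k.1 0 0 = α + β * h.1 0 0 ∧ k.1 0 1 = β * h.1 0 1 ∧ k.1 1 0 = β * h.1 1 0 ∧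
      k.1 1 1 = α + β * h.1 1 1 := by
  have e00 := congrArg (fun g : S2 F => g.1 0 0) hc
  have e01 := congrArg (fun g : S2 F => g.1 0 1) hc
  have e10 := congrArg (fun g : S2 F => g.1 1 0) hc
  simp only [mul00, mul01, mul10] at e00 e01 e10
  by_cases h01 : h.1 0 1 = 0
  · by_cases h10 : h.1 1 0 = 0
    · by_cases hd : h.1 0 0 - h.1 1 1 = 0
      · exfalso
        rcases eq_pm_of_scalar h01 h10 (sub_eq_zero.1 hd) with rfl | rfl
        · exact h1 tr_one
        · exact h2 tr_neg_one
      · refine ⟨k.1 0 0 - (k.1 0 0 - k.1 1 1) / (h.1 0 0 - h.1 1 1) * h.1 0 0,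
          (k.1 0 0 - k.1 1 1) / (h.1 0 0 - h.1 1 1), by ring, ?_, ?_, ?_⟩
        · rw [h01, mul_zero]
          refine mul_can hd ?_
          rw [h01] at e01
          linear_combination -e01
        · rw [h10, mul_zero]
          refine mul_can hd ?_
          rw [h10] at e10
          linear_combination e10
        · field_simp; ring
    · refine ⟨k.1 0 0 - k.1 1 0 / h.1 1 0 * h.1 0 0, k.1 1 0 / h.1 1 0, by ring, ?_, ?_, ?_⟩
      · field_simp; linear_combination e00
      · field_simp
      · field_simp; linear_combination e10
  · refine ⟨k.1 0 0 - k.1 0 1 / h.1 0 1 * h.1 0 0, k.1 0 1 / h.1 0 1, by ring, ?_, ?_, ?_⟩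
    · field_simp
    · field_simp; linear_combination -e00
    · field_simp; linear_combination -e01

lemma comm_trans {h k k' : S2 F} (h1 : tr h ≠ 2) (h2 : tr h ≠ -2) (hc : k * h = h * k)
    (hc' : k' * h = h * k') : k * k' = k' * k := by
  obtain ⟨a, b, e1, e2, e3, e4⟩ := comm_form h1 h2 hc
  obtain ⟨a', b', e1', e2', e3', e4'⟩ := comm_form h1 h2 hc'
  apply ext4 <;> simp only [mul00, mul01, mul10, mul11, e1, e2, e3, e4, e1', e2', e3', e4'] <;> ring

/-- a centralizer of a regular semisimple element has at most two elements of given trace -/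
lemma two_of_trace (h20 : (2 : F) ≠ 0) {h k₁ k₂ k₃ : S2 F} (h1 : tr h ≠ 2) (h2 : tr h ≠ -2) {s : F}
    (c1 : k₁ * h = h * k₁) (c2 : k₂ * h = h * k₂) (c3 : k₃ * h = h * k₃)
    (t1 : tr k₁ = s) (t2 : tr k₂ = s) (t3 : tr k₃ = s) : k₁ = k₂ ∨ k₁ = k₃ ∨ k₂ = k₃ := by
  obtain ⟨a, b, e1, e2, e3, e4⟩ := comm_form h1 h2 c1
  obtain ⟨a', b', e1', e2', e3', e4'⟩ := comm_form h1 h2 c2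
  obtain ⟨a'', b'', e1'', e2'', e3'', e4''⟩ := comm_form h1 h2 c3
  have dh := det1 h
  have hT : tr h ^ 2 - 4 ≠ 0 := by
    have : tr h ^ 2 - 4 = (tr h - 2) * (tr h - -2) := by ring
    rw [this]
    exact mul_ne_zero (sub_ne_zero.2 h1) (sub_ne_zero.2 h2)
  have key : ∀ (k : S2 F) (a b : F), k.1 0 0 = a + b * h.1 0 0 → k.1 0 1 = b * h.1 0 1 →
      k.1 1 0 = b * h.1 1 0 → k.1 1 1 = a + b * h.1 1 1 → tr k = s →
      b ^ 2 * (tr h ^ 2 - 4) = s ^ 2 - 4 ∧ 2 * a = s - b * tr h := by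
    intro k a b e1 e2 e3 e4 t
    have dk := det1 k
    simp only [tr] at *
    rw [e1, e2, e3, e4] at dk
    rw [e1, e4] at t
    subst t
    constructor
    · linear_combination -4 * dk + 4 * b ^ 2 * dh
    · ring
  obtain ⟨q1, r1⟩ := key _ _ _ e1 e2 e3 e4 t1
  obtain ⟨q2, r2⟩ := key _ _ _ e1' e2' e3' e4' t2
  obtain ⟨q3, r3⟩ := key _ _ _ e1'' e2'' e3'' e4'' t3
  have eqq : ∀ {k k' : S2 F} {a b a' b' : F}, k.1 0 0 = a + b * h.1 0 0 → k.1 0 1 = b * h.1 0 1 →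
      k.1 1 0 = b * h.1 1 0 → k.1 1 1 = a + b * h.1 1 1 →
      k'.1 0 0 = a' + b' * h.1 0 0 → k'.1 0 1 = b' * h.1 0 1 →
      k'.1 1 0 = b' * h.1 1 0 → k'.1 1 1 = a' + b' * h.1 1 1 →
      2 * a = s - b * tr h → 2 * a' = s - b' * tr h → b = b' → k = k' := by
    intro k k' a b a' b' e1 e2 e3 e4 e1' e2' e3' e4' r r' hb
    subst hb
    have : a = a' := mul_left_cancel₀ h20 (r.trans r'.symm)
    subst this
    exact ext4 (e1.trans e1'.symm) (e2.trans e2'.symm) (e3.trans e3'.symm) (e4.trans e4'.symm)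
  have s12 : b ^ 2 = b' ^ 2 := mul_right_cancel₀ hT (q1.trans q2.symm)
  have s13 : b ^ 2 = b'' ^ 2 := mul_right_cancel₀ hT (q1.trans q3.symm)
  rcases sq_eq_sq_iff_eq_or_eq_neg.1 s12 with h12 | h12
  · left
    exact eqq e1 e2 e3 e4 e1' e2' e3' e4' r1 r2 h12
  · rcases sq_eq_sq_iff_eq_or_eq_neg.1 s13 with h13 | h13
    · right; left
      exact eqq e1 e2 e3 e4 e1'' e2'' e3'' e4'' r1 r3 h13
    · right; right
      refine eqq e1' e2' e3' e4' e1'' e2'' e3'' e4'' r2 r3 ?_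
      linear_combination h12 - h13

/-- direction of a nilpotent matrix -/
lemma nilp_dir {α β γ : F} (h0 : ¬ (α = 0 ∧ β = 0 ∧ γ = 0)) (hq : α ^ 2 + β * γ = 0) :
    ∃ e : F × F, e ≠ 0 ∧ ∀ y : S2 F,
      α * (y.1 0 0 - y.1 1 1) + β * y.1 1 0 + γ * y.1 0 1 = 0 → Inc y e e := by
  by_cases hb : β = 0
  · have ha : α = 0 := by
      rw [hb, zero_mul, add_zero] at hq
      exact pow_eq_zero_iff (two_ne_zero) |>.1 hq
    have hc : γ ≠ 0 := fun hc => h0 ⟨ha, hb, hc⟩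
    refine ⟨(0, 1), by simp, ?_⟩
    intro y hy
    rw [ha, hb] at hy
    have : y.1 0 1 = 0 := by
      refine (mul_eq_zero.1 (?_ : γ * _ = 0)).resolve_left hc
      linear_combination hy
    simp [Inc, this]
  · refine ⟨(β, -α), by simp [hb], ?_⟩
    intro y hy
    simp only [Inc]
    linear_combination -β * hy + y.1 0 1 * hq

lemma tri_aux {y : S2 F} {α β γ s : F} (_h0 : ¬ (α = 0 ∧ β = 0 ∧ γ = 0)) (hs0 : s ≠ 0) (hs1 : s ≠ 1)
    (d1 : (y.1 0 0 + α) * (y.1 1 1 - α) - (y.1 0 1 + β) * (y.1 1 0 + γ) = 1)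
    (d2 : (y.1 0 0 + s * α) * (y.1 1 1 - s * α) - (y.1 0 1 + s * β) * (y.1 1 0 + s * γ) = 1) :
    α ^ 2 + β * γ = 0 ∧ α * (y.1 0 0 - y.1 1 1) + β * y.1 1 0 + γ * y.1 0 1 = 0 := by
  have d := det1 y
  have hq : α ^ 2 + β * γ = 0 := by
    refine (mul_eq_zero.1 (?_ : (s * (s - 1)) * _ = 0)).resolve_left
      (mul_ne_zero hs0 (sub_ne_zero.2 hs1))
    linear_combination s * d1 - d2 - (s - 1) * d
  refine ⟨hq, ?_⟩
  linear_combination d - d1 - hq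

lemma tri_main (h20 : (2 : F) ≠ 0) {t : F} (ht : t ≠ 0) {y₁ y₂ y₃ y' y'' : S2 F}
    (t1 : tr y₁ = t) (t2 : tr y₂ = t) (t3 : tr y₃ = t)
    (n12 : y₁ ≠ y₂) (n13 : y₁ ≠ y₃) (n23 : y₂ ≠ y₃)
    (hE : ¬ ∃ e : F × F, e ≠ 0 ∧ Inc y₁ e e ∧ Inc y₂ e e)
    (t' : tr y' = t) (t'' : tr y'' = t)
    (u' : tr (y₂ * y₁⁻¹ * y') = t) (u'' : tr (y₂ * y₁⁻¹ * y'') = t)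
    (v' : tr (y₃ * y₁⁻¹ * y') = t) (v'' : tr (y₃ * y₁⁻¹ * y'') = t) :
    y₁ = y' ∨ y₁ = y'' ∨ y' = y'' := by
  have hUy : y₂ = (y₂ * y₁⁻¹) * y₁ := by group
  have hVy : y₃ = (y₃ * y₁⁻¹) * y₁ := by group
  set U := y₂ * y₁⁻¹ with hU
  set V := y₃ * y₁⁻¹ with hV
  have dU := det1 U
  have dV := det1 V
  have d1 := det1 y₁
  have d2 := det1 y₂
  have d3 := det1 y₃
  by_contra! hne
  obtain ⟨na, nb, nc⟩ := hne
  -- the vectors a, b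
  have ha : ¬ (U.1 0 0 - U.1 1 1 = 0 ∧ U.1 0 1 = 0 ∧ U.1 1 0 = 0) := by
    rintro ⟨z1, z2, z3⟩
    rcases eq_pm_of_scalar z2 z3 (sub_eq_zero.1 z1) with h | h
    · rw [h, one_mul] at hUy; exact n12 hUy.symm
    · rw [h] at hUy
      have : tr y₂ = - tr y₁ := by
        rw [hUy]; simp only [tr, mul00, mul11, neg00, neg01, neg10, neg11, one00, one01, one10, one11]
        ring
      rw [t1, t2] at this
      have h2 : 2 * t = 0 := by linear_combination this
      exact (mul_ne_zero h20 ht) h2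
  have e00 : y₂.1 0 0 = _ := (congrArg (fun g : S2 F => g.1 0 0) hUy).trans (mul00 _ _)
  have e01 : y₂.1 0 1 = _ := (congrArg (fun g : S2 F => g.1 0 1) hUy).trans (mul01 _ _)
  have e10 : y₂.1 1 0 = _ := (congrArg (fun g : S2 F => g.1 1 0) hUy).trans (mul10 _ _)
  have e11 : y₂.1 1 1 = _ := (congrArg (fun g : S2 F => g.1 1 1) hUy).trans (mul11 _ _)
  have f00 : y₃.1 0 0 = _ := (congrArg (fun g : S2 F => g.1 0 0) hVy).trans (mul00 _ _)
  have f01 : y₃.1 0 1 = _ := (congrArg (fun g : S2 F => g.1 0 1) hVy).trans (mul01 _ _)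
  have f10 : y₃.1 1 0 = _ := (congrArg (fun g : S2 F => g.1 1 0) hVy).trans (mul10 _ _)
  have f11 : y₃.1 1 1 = _ := (congrArg (fun g : S2 F => g.1 1 1) hVy).trans (mul11 _ _)
  by_cases hcr : ∃ s : F, V.1 0 0 - V.1 1 1 = s * (U.1 0 0 - U.1 1 1) ∧ V.1 0 1 = s * U.1 0 1 ∧
      V.1 1 0 = s * U.1 1 0
  · -- collinear case
    obtain ⟨s, s1, s2, s3⟩ := hcr
    have hr1 : ∃ r, V.1 0 0 = r + s * U.1 0 0 := ⟨V.1 0 0 - s * U.1 0 0, by ring⟩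
    obtain ⟨r, hr1⟩ := hr1
    have hr2 : V.1 1 1 = r + s * U.1 1 1 := by linear_combination hr1 - s1
    have g00 : y₃.1 0 0 = r * y₁.1 0 0 + s * y₂.1 0 0 := by
      rw [f00, e00, hr1, s2]; ring
    have g01 : y₃.1 0 1 = r * y₁.1 0 1 + s * y₂.1 0 1 := by
      rw [f01, e01, hr1, s2]; ring
    have g10 : y₃.1 1 0 = r * y₁.1 1 0 + s * y₂.1 1 0 := by
      rw [f10, e10, hr2, s3]; ring
    have g11 : y₃.1 1 1 = r * y₁.1 1 1 + s * y₂.1 1 1 := by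
      rw [f11, e11, hr2, s3]; ring
    clear e00 e01 e10 e11 f00 f01 f10 f11
    have hr : r = 1 - s := by
      refine mul_right_cancel₀ ht ?_
      simp only [tr] at t1 t2 t3
      linear_combination - g00 - g11 + t3 - s * t2 - r * t1
    have hs0 : s ≠ 0 := by
      rintro rfl
      apply n13
      apply ext4
      · rw [g00, hr]; ring
      · rw [g01, hr]; ring
      · rw [g10, hr]; ring
      · rw [g11, hr]; ring
    have hs1 : s ≠ 1 := by
      rintro rfl
      apply n23
      apply ext4
      · rw [g00, hr]; ring
      · rw [g01, hr]; ring
      · rw [g10, hr]; ring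
      · rw [g11, hr]; ring
    have m11 : y₂.1 1 1 - y₁.1 1 1 = - (y₂.1 0 0 - y₁.1 0 0) := by
      simp only [tr] at t1 t2
      linear_combination t2 - t1
    have h0 : ¬ (y₂.1 0 0 - y₁.1 0 0 = 0 ∧ y₂.1 0 1 - y₁.1 0 1 = 0 ∧ y₂.1 1 0 - y₁.1 1 0 = 0) := by
      rintro ⟨z1, z2, z3⟩
      apply n12
      apply ext4
      · linear_combination -z1
      · linear_combination -z2
      · linear_combination -z3
      · linear_combination z1 - m11
    have hy2 : y₂.1 1 1 = y₁.1 1 1 - (y₂.1 0 0 - y₁.1 0 0) := by linear_combination m11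
    obtain ⟨hq, hl⟩ := tri_aux (y := y₁) h0 hs0 hs1
      (by rw [← hy2]; linear_combination d2)
      (by
        rw [g00, g01, g10, g11, hr] at d3
        linear_combination d3 - ((1 - s) * y₁.1 0 0 + s * y₂.1 0 0) * s * m11)
    obtain ⟨e, he, H⟩ := nilp_dir h0 hq
    refine hE ⟨e, he, H _ hl, H _ ?_⟩
    linear_combination hl + 2 * hq - (y₂.1 0 0 - y₁.1 0 0) * m11
  · -- independent case
    have dd' := det1 y'
    have dd'' := det1 y''
    simp only [tr] at t1 t2 t3 t' t'' 
    simp only [tr, mul00, mul11] at u' u'' v' v''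
    have w' : (y'.1 0 0 - y₁.1 0 0) * (U.1 0 0 - U.1 1 1) + (y'.1 0 1 - y₁.1 0 1) * U.1 1 0
        + (y'.1 1 0 - y₁.1 1 0) * U.1 0 1 = 0 := by
      linear_combination u' - t2 + e00 + e11 - U.1 1 1 * (t' - t1)
    have w'' : (y''.1 0 0 - y₁.1 0 0) * (U.1 0 0 - U.1 1 1) + (y''.1 0 1 - y₁.1 0 1) * U.1 1 0
        + (y''.1 1 0 - y₁.1 1 0) * U.1 0 1 = 0 := by
      linear_combination u'' - t2 + e00 + e11 - U.1 1 1 * (t'' - t1)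
    have x' : (y'.1 0 0 - y₁.1 0 0) * (V.1 0 0 - V.1 1 1) + (y'.1 0 1 - y₁.1 0 1) * V.1 1 0
        + (y'.1 1 0 - y₁.1 1 0) * V.1 0 1 = 0 := by
      linear_combination v' - t3 + f00 + f11 - V.1 1 1 * (t' - t1)
    have x'' : (y''.1 0 0 - y₁.1 0 0) * (V.1 0 0 - V.1 1 1) + (y''.1 0 1 - y₁.1 0 1) * V.1 1 0
        + (y''.1 1 0 - y₁.1 1 0) * V.1 0 1 = 0 := by
      linear_combination v'' - t3 + f00 + f11 - V.1 1 1 * (t'' - t1)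
    have m' : y'.1 1 1 = y₁.1 1 1 - (y'.1 0 0 - y₁.1 0 0) := by linear_combination t' - t1
    have m'' : y''.1 1 1 = y₁.1 1 1 - (y''.1 0 0 - y₁.1 0 0) := by linear_combination t'' - t1
    have h0 : ¬ (y'.1 0 0 - y₁.1 0 0 = 0 ∧ y'.1 0 1 - y₁.1 0 1 = 0 ∧ y'.1 1 0 - y₁.1 1 0 = 0) := by
      rintro ⟨z1, z2, z3⟩
      apply na
      apply ext4
      · linear_combination -z1
      · linear_combination -z2
      · linear_combination -z3
      · linear_combination z1 - m'
    have hpar : ∃ s : F, y''.1 0 0 - y₁.1 0 0 = s * (y'.1 0 0 - y₁.1 0 0) ∧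
        y''.1 0 1 - y₁.1 0 1 = s * (y'.1 0 1 - y₁.1 0 1) ∧
        y''.1 1 0 - y₁.1 1 0 = s * (y'.1 1 0 - y₁.1 1 0) := by
      generalize y''.1 0 0 - y₁.1 0 0 = α'' at *
      generalize y''.1 0 1 - y₁.1 0 1 = β'' at *
      generalize y''.1 1 0 - y₁.1 1 0 = γ'' at *
      generalize y'.1 0 0 - y₁.1 0 0 = α' at *
      generalize y'.1 0 1 - y₁.1 0 1 = β' at *
      generalize y'.1 1 0 - y₁.1 1 0 = γ' at *
      generalize U.1 0 0 - U.1 1 1 = a1 at *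
      generalize U.1 0 1 = a3 at *
      generalize U.1 1 0 = a2 at *
      generalize V.1 0 0 - V.1 1 1 = b1 at *
      generalize V.1 0 1 = b3 at *
      generalize V.1 1 0 = b2 at *
      -- cross product of primed vectors kills a and b, which are not parallel
      have q1 : β' * γ'' - γ' * β'' = 0 ∧ γ' * α'' - α' * γ'' = 0 ∧ α' * β'' - β' * α'' = 0 := by
        by_contra hq
        apply hcr
        -- a and b are multiples of the cross product
        have A1 : a1 * (γ' * α'' - α' * γ'') = a2 * (β' * γ'' - γ' * β'') := by
          linear_combination -γ'' * w' + γ' * w''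
        have A2 : a1 * (α' * β'' - β' * α'') = a3 * (β' * γ'' - γ' * β'') := by
          linear_combination β'' * w' - β' * w''
        have A3 : a2 * (α' * β'' - β' * α'') = a3 * (γ' * α'' - α' * γ'') := by
          linear_combination -α'' * w' + α' * w''
        have B1 : b1 * (γ' * α'' - α' * γ'') = b2 * (β' * γ'' - γ' * β'') := by
          linear_combination -γ'' * x' + γ' * x''
        have B2 : b1 * (α' * β'' - β' * α'') = b3 * (β' * γ'' - γ' * β'') := by
          linear_combination β'' * x' - β' * x''
        have B3 : b2 * (α' * β'' - β' * α'') = b3 * (γ' * α'' - α' * γ'') := by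
          linear_combination -α'' * x' + α' * x''
        generalize β' * γ'' - γ' * β'' = c1 at *
        generalize γ' * α'' - α' * γ'' = c2 at *
        generalize α' * β'' - β' * α'' = c3 at *
        have P : ∃ s, a1 = s * c1 ∧ a2 = s * c2 ∧ a3 = s * c3 := by
          by_cases z1 : c1 = 0
          · by_cases z2 : c2 = 0
            · have z3 : c3 ≠ 0 := fun z3 => hq ⟨z1, z2, z3⟩
              refine ⟨a3 / c3, ?_, ?_, ?_⟩ <;> field_simp <;> first | linear_combination A2 | linear_combination A3
            · refine ⟨a2 / c2, ?_, ?_, ?_⟩ <;> field_simp <;> first | linear_combination A1 | linear_combination -A3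
          · refine ⟨a1 / c1, ?_, ?_, ?_⟩ <;> field_simp <;> first | linear_combination -A1 | linear_combination -A2
        have Q : ∃ s, b1 = s * c1 ∧ b2 = s * c2 ∧ b3 = s * c3 := by
          by_cases z1 : c1 = 0
          · by_cases z2 : c2 = 0
            · have z3 : c3 ≠ 0 := fun z3 => hq ⟨z1, z2, z3⟩
              refine ⟨b3 / c3, ?_, ?_, ?_⟩ <;> field_simp <;> first | linear_combination B2 | linear_combination B3
            · refine ⟨b2 / c2, ?_, ?_, ?_⟩ <;> field_simp <;> first | linear_combination B1 | linear_combination -B3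
          · refine ⟨b1 / c1, ?_, ?_, ?_⟩ <;> field_simp <;> first | linear_combination -B1 | linear_combination -B2
        obtain ⟨s, i1, i2, i3⟩ := P
        obtain ⟨r, j1, j2, j3⟩ := Q
        have hs : s ≠ 0 := by
          rintro rfl
          apply ha
          simp [i1, i2, i3]
        refine ⟨r / s, ?_, ?_, ?_⟩
        · rw [i1, j1]; field_simp
        · rw [i3, j3]; field_simp
        · rw [i2, j2]; field_simp
      obtain ⟨q1, q2, q3⟩ := q1
      by_cases z1 : α' = 0
      · by_cases z2 : β' = 0
        · have z3 : γ' ≠ 0 := fun z3 => h0 ⟨z1, z2, z3⟩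
          refine ⟨γ'' / γ', ?_, ?_, ?_⟩ <;> field_simp <;> first | linear_combination q2 | linear_combination -q1
        · refine ⟨β'' / β', ?_, ?_, ?_⟩ <;> field_simp <;> first | linear_combination q1 | linear_combination -q3
      · refine ⟨α'' / α', ?_, ?_, ?_⟩ <;> field_simp <;> first | linear_combination q3 | linear_combination -q2
    obtain ⟨s, s1, s2, s3⟩ := hpar
    have hs0 : s ≠ 0 := by
      rintro rfl
      apply nb
      apply ext4
      · linear_combination -s1
      · linear_combination -s2
      · linear_combination -s3
      · linear_combination s1 - m''
    have hs1 : s ≠ 1 := by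
      rintro rfl
      apply nc
      apply ext4
      · linear_combination -s1
      · linear_combination -s2
      · linear_combination -s3
      · linear_combination s1 - m'' + m'
    obtain ⟨hq, hl⟩ := tri_aux (y := y₁) h0 hs0 hs1
      (by rw [← m']; linear_combination dd')
      (by rw [← s1, ← s2, ← s3, ← m'']; linear_combination dd'')
    obtain ⟨e, he, H⟩ := nilp_dir h0 hq
    have i1 := H _ hl
    have i2 := H U (by linear_combination w')
    refine hE ⟨e, he, i1, ?_⟩
    rw [hUy]
    exact inc_mul he i1 i2

end algebra
end GrowthSL

namespace GrowthSL

section general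
variable {G : Type*} [Group G] [DecidableEq G]

lemma prod_count (X Y E Z : Finset G) (z : G)
    (hE : ∀ x ∈ X, ∀ x' ∈ X, ∀ y ∈ Y, ∀ y' ∈ Y, x * z * y = x' * z * y' → x'⁻¹ * x ∈ E)
    (hZ : ∀ x ∈ X, ∀ y ∈ Y, x * z * y ∈ Z) : X.card * Y.card ≤ E.card * Z.card := by
  rw [← Finset.card_product]
  refine Finset.card_le_mul_card_image_of_maps_to (f := fun q : G × G => q.1 * z * q.2) ?_ _ ?_
  · rintro ⟨x, y⟩ h
    rw [Finset.mem_product] at h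
    exact hZ _ h.1 _ h.2
  · intro b _
    rcases Finset.eq_empty_or_nonempty (Finset.filter (fun q : G × G => q.1 * z * q.2 = b) (X ×ˢ Y))
      with h | ⟨⟨x0, y0⟩, h0⟩
    · rw [h]; simp
    · simp only [Finset.mem_filter, Finset.mem_product] at h0
      refine Finset.card_le_card_of_injOn (fun q => x0⁻¹ * q.1) ?_ ?_
      · rintro ⟨x, y⟩ h
        simp only [Finset.coe_filter, Finset.mem_product, Set.mem_ofPred_eq] at h
        exact hE _ h.1.1 _ h0.1.1 _ h.1.2 _ h0.1.2 (h.2.trans h0.2.symm)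
      · rintro ⟨x, y⟩ h ⟨x', y'⟩ h' e
        simp only [Finset.coe_filter, Finset.mem_product, Set.mem_ofPred_eq] at h h'
        have e1 : x = x' := mul_left_cancel e
        subst e1
        have e2 : y = y' := mul_left_cancel (h.2.trans h'.2.symm)
        rw [e2]

lemma gen_ind {A : Finset G} (hA : A⁻¹ = A) (hg : Subgroup.closure (A : Set G) = ⊤) {P : G → Prop}
    (h1 : P 1) (hm : ∀ a ∈ A, ∀ g, P g → P (a * g)) (g : G) : P g := by
  have hmem : g ∈ Subgroup.closure (A : Set G) := by rw [hg]; trivial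
  refine Subgroup.closure_induction_left (p := fun x _ => P x) h1 ?_ ?_ hmem
  · intro x hx y _ hy
    exact hm x hx y hy
  · intro x hx y _ hy
    refine hm _ ?_ y hy
    rw [← hA]
    exact Finset.inv_mem_inv hx

lemma pow_mul_mem {A : Finset G} {m n : ℕ} {g h : G} (hg : g ∈ A ^ m) (hh : h ∈ A ^ n) :
    g * h ∈ A ^ (m + n) := by
  rw [pow_add]; exact Finset.mul_mem_mul hg hh

lemma pow_inv_mem {A : Finset G} (hA : A⁻¹ = A) {m : ℕ} {g : G} (hg : g ∈ A ^ m) : g⁻¹ ∈ A ^ m := by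
  have := Finset.inv_mem_inv hg
  rwa [← inv_pow, hA] at this

lemma pow_one_mem {A : Finset G} {g : G} (hg : g ∈ A) : g ∈ A ^ 1 := by rwa [pow_one]

lemma card_fix_le {A : Finset G} (hA : A⁻¹ = A) (P Q : G → Prop) [DecidablePred P] [DecidablePred Q]
    (h : ∀ a ∈ A, ∀ b ∈ A, P a → P b → Q (a⁻¹ * b)) :
    (A.filter P).card ≤ ((A ^ 2).filter Q).card := by
  rcases Finset.eq_empty_or_nonempty (A.filter P) with h0 | ⟨a, ha⟩
  · rw [h0]; simp
  · rw [Finset.mem_filter] at ha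
    refine Finset.card_le_card_of_injOn (fun b => a⁻¹ * b) ?_ ?_
    · intro b hb
      simp only [Finset.coe_filter, Set.mem_ofPred_eq] at hb ⊢
      exact ⟨pow_mul_mem (m := 1) (n := 1) (pow_inv_mem hA (pow_one_mem ha.1)) (pow_one_mem hb.1),
        h _ ha.1 _ hb.1 ha.2 hb.2⟩
    · intro b _ b' _ e
      exact mul_left_cancel e

end general

section alg2
variable {F : Type*} [Field F]

lemma exists_inc (x y : F × F) (hx : x ≠ 0) (hy : y ≠ 0) : ∃ g : S2 F, Inc g x y := by
  have key : ∀ w : F × F, w ≠ 0 → ∃ g : S2 F, Inc g (1, 0) w := by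
    intro w hw
    by_cases h1 : w.1 = 0
    · have h2 : w.2 ≠ 0 := (pair_ne hw).resolve_left (by simpa using h1)
      refine ⟨⟨!![0, -(w.2)⁻¹; w.2, 0], ?_⟩, ?_⟩
      · rw [Matrix.det_fin_two_of]; field_simp; ring
      · simp [Inc, h1]
    · refine ⟨⟨!![w.1, 0; w.2, (w.1)⁻¹], ?_⟩, ?_⟩
      · rw [Matrix.det_fin_two_of]; field_simp; ring
      · simp [Inc]; ring
  obtain ⟨g, hg⟩ := key x hx
  obtain ⟨h, hh⟩ := key y hy
  exact ⟨h * g⁻¹, inc_mul (by simp) (inc_inv hg) hh⟩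

lemma par_trans {x y z : F × F} (hy : y ≠ 0) (h1 : Par x y) (h2 : Par y z) : Par x z := by
  have := inc_mul hy (inc_one.2 h1) (inc_one.2 h2)
  rw [mul_one] at this
  exact inc_one.1 this

lemma exists_third {e f : F × F} (he : e ≠ 0) (hf : f ≠ 0) :
    ∃ w : F × F, w ≠ 0 ∧ ¬ Par e w ∧ ¬ Par f w := by
  by_cases h : Par e f
  · have : ∃ w : F × F, w ≠ 0 ∧ ¬ Par e w := by
      rcases pair_ne he with h1 | h1
      · refine ⟨(0, 1), by simp, by simpa [Par] using h1⟩
      · refine ⟨(1, 0), by simp, by simpa [Par] using h1⟩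
    obtain ⟨w, hw, hn⟩ := this
    exact ⟨w, hw, hn, fun h' => hn (par_trans hf h h')⟩
  · have h1 : ¬ Par e (e + f) := by
      intro h'; apply h; simp only [Par, Prod.fst_add, Prod.snd_add] at *
      linear_combination h'
    refine ⟨e + f, ne_of_not_par_right h1, h1, ?_⟩
    intro h'; apply h; simp only [Par, Prod.fst_add, Prod.snd_add] at *
    linear_combination -h'

lemma no_pair [DecidableEq (S2 F)] {A : Finset (S2 F)} (hA : A⁻¹ = A)
    (hg : Subgroup.closure (A : Set (S2 F)) = ⊤) {e f : F × F} (he : e ≠ 0) (hf : f ≠ 0) :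
    ∃ a ∈ A, ¬ ((Inc a e e ∨ Inc a e f) ∧ (Inc a f e ∨ Inc a f f)) := by
  by_contra! h
  obtain ⟨w, hw, n1, n2⟩ := exists_third he hf
  obtain ⟨g, hgw⟩ := exists_inc e w he hw
  have : ∀ g : S2 F, Inc g e e ∨ Inc g e f := by
    refine gen_ind hA hg (P := fun g => Inc g e e ∨ Inc g e f) ?_ ?_
    · left; exact inc_one.2 (par_refl e)
    · intro a ha g hg
      obtain ⟨h1, h2⟩ := h a ha
      rcases hg with hg | hg
      · exact h1.imp (inc_mul he hg) (inc_mul he hg)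
      · exact h2.imp (inc_mul hf hg) (inc_mul hf hg)
  rcases this g with h' | h'
  · exact n1 (inc_unique he h' hgw)
  · exact n2 (inc_unique he h' hgw)

open Classical in
lemma borel_bound [DecidableEq (S2 F)] {A : Finset (S2 F)} (hA : A⁻¹ = A)
    (hg : Subgroup.closure (A : Set (S2 F)) = ⊤) {x y : F × F} (hx : x ≠ 0) (hy : y ≠ 0) :
    (A.filter (fun a => Inc a x y)).card ^ 4 ≤ (A ^ 5).card ^ 2 * (2 * (A ^ 9).card) := by
  obtain ⟨w, hw, hwx⟩ := no_pair hA hg hx hx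
  have hwx : ¬ Inc w x x := by tauto
  set z := app w x with hz
  have hz0 : z ≠ 0 := app_ne hx
  have hwz : Inc w x z := inc_app w x
  have hxz : ¬ Par x z := fun h => hwx (inc_par_right hz0 hwz (par_symm h))
  set X := (A ^ 2).filter (fun a => Inc a x x) with hX
  set E := (A ^ 4).filter (fun a => Inc a x x ∧ Inc a z z) with hE
  have c1 : (A.filter (fun a => Inc a x y)).card ≤ X.card := by
    apply card_fix_le hA
    intro a _ b _ h1 h2
    exact inc_mul hy h2 (inc_inv h1)
  have c2 : X.card * X.card ≤ E.card * (A ^ 5).card := by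
    refine prod_count X X E (A ^ 5) w ?_ ?_
    · intro g hg g' hg' h hh h' hh' e
      simp only [hX, hE, Finset.mem_filter] at *
      refine ⟨pow_mul_mem (m := 2) (n := 2) (pow_inv_mem hA hg'.1) hg.1,
        inc_mul hx hg.2 (inc_inv hg'.2), ?_⟩
      have e' : g'⁻¹ * g = w * (h' * h⁻¹) * w⁻¹ := by
        have : g'⁻¹ * g = g'⁻¹ * (g * w * h) * h⁻¹ * w⁻¹ := by group
        rw [this, e]; group
      rw [e']
      exact inc_mul hx (inc_inv hwz) (inc_mul hx (inc_mul hx (inc_inv hh.2) hh'.2) hwz)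
    · intro g hg h hh
      simp only [hX, Finset.mem_filter] at *
      exact pow_mul_mem (m := 3) (n := 2) (pow_mul_mem (m := 2) (n := 1) hg.1 (pow_one_mem hw)) hh.1
  have c3 : E.card * E.card ≤ 2 * (A ^ 9).card := by
    obtain ⟨v, hv, hvn⟩ := no_pair hA hg hx hz0
    have : ∃ q : F × F, q ≠ 0 ∧ ¬ Par q x ∧ ¬ Par q z ∧ (Inc v x q ∨ Inc v z q) := by
      rcases not_and_or.1 hvn with h | h
      · push Not at h
        refine ⟨app v x, app_ne hx, ?_, ?_, Or.inl (inc_app _ _)⟩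
        · exact fun h' => h.1 (inc_par_right (app_ne hx) (inc_app v x) h')
        · exact fun h' => h.2 (inc_par_right (app_ne hx) (inc_app v x) h')
      · push Not at h
        refine ⟨app v z, app_ne hz0, ?_, ?_, Or.inr (inc_app _ _)⟩
        · exact fun h' => h.1 (inc_par_right (app_ne hz0) (inc_app v z) h')
        · exact fun h' => h.2 (inc_par_right (app_ne hz0) (inc_app v z) h')
    obtain ⟨q, hq, qx, qz, hvq⟩ := this
    have h2 : ({1, -1} : Finset (S2 F)).card ≤ 2 := Finset.card_le_two
    refine le_trans (prod_count E E {1, -1} (A ^ 9) v ?_ ?_) (Nat.mul_le_mul_right _ h2)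
    · intro g hg g' hg' h hh h' hh' e
      simp only [hE, Finset.mem_filter] at *
      have e' : g'⁻¹ * g = v * (h' * h⁻¹) * v⁻¹ := by
        have : g'⁻¹ * g = g'⁻¹ * (g * v * h) * h⁻¹ * v⁻¹ := by group
        rw [this, e]; group
      have i3 : Inc (g'⁻¹ * g) q q := by
        rw [e']
        rcases hvq with hvq | hvq
        · exact inc_mul hx (inc_inv hvq) (inc_mul hx (inc_mul hx (inc_inv hh.2.1) hh'.2.1) hvq)
        · exact inc_mul hz0 (inc_inv hvq) (inc_mul hz0 (inc_mul hz0 (inc_inv hh.2.2) hh'.2.2) hvq)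
      have := three_fix hxz (fun h => qz (par_symm h)) qx (inc_mul hx hg.2.1 (inc_inv hg'.2.1))
        (inc_mul hz0 hg.2.2 (inc_inv hg'.2.2)) i3
      simpa using this
    · intro g hg h hh
      simp only [hE, Finset.mem_filter] at *
      exact pow_mul_mem (m := 5) (n := 4) (pow_mul_mem (m := 4) (n := 1) hg.1 (pow_one_mem hv)) hh.1
  calc _ ≤ X.card ^ 4 := Nat.pow_le_pow_left c1 4
    _ = (X.card * X.card) ^ 2 := by ring
    _ ≤ (E.card * (A ^ 5).card) ^ 2 := Nat.pow_le_pow_left c2 2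
    _ = (A ^ 5).card ^ 2 * (E.card * E.card) := by ring
    _ ≤ _ := Nat.mul_le_mul_left _ c3

/-- eigenvectors of a regular element -/
lemma eigen_pair {g : S2 F} (h1 : tr g ≠ 2) (h2 : tr g ≠ -2) :
    ∃ e f : F × F, e ≠ 0 ∧ f ≠ 0 ∧ ∀ x : F × F, x ≠ 0 → Inc g x x → Par e x ∨ Par f x := by
  by_cases hex : ∃ e : F × F, e ≠ 0 ∧ Inc g e e
  · obtain ⟨e, he, hge⟩ := hex
    by_cases hex2 : ∃ f : F × F, Inc g f f ∧ ¬ Par e f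
    · obtain ⟨f, hgf, hn⟩ := hex2
      refine ⟨e, f, he, ne_of_not_par_right hn, ?_⟩
      intro x hx hgx
      by_contra! hc
      rcases three_fix hn hc.2 (fun h => hc.1 (par_symm h)) hge hgf hgx with h | h
      · exact h1 (h ▸ tr_one)
      · exact h2 (h ▸ tr_neg_one)
    · push Not at hex2
      exact ⟨e, e, he, he, fun x _ hgx => Or.inl (hex2 x hgx)⟩
  · push Not at hex
    exact ⟨(1, 0), (1, 0), by simp, by simp, fun x hx hgx => absurd hgx (hex x hx)⟩

/-- two matrices share an eigenvector -/
def Share (y y' : S2 F) : Prop := ∃ e : F × F, e ≠ 0 ∧ Inc y e e ∧ Inc y' e e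

open Classical in
lemma share_count [DecidableEq (S2 F)] {A : Finset (S2 F)} {M : ℕ}
    (hM : ∀ x y : F × F, x ≠ 0 → y ≠ 0 → (A.filter (fun a => Inc a x y)).card ≤ M)
    {g : S2 F} (h1 : tr g ≠ 2) (h2 : tr g ≠ -2) (a : S2 F) :
    (A.filter (fun b => Share (a * g * a⁻¹) (b * g * b⁻¹))).card ≤ 4 * M := by
  obtain ⟨e, f, he, hf, H⟩ := eigen_pair h1 h2
  have sub : A.filter (fun b => Share (a * g * a⁻¹) (b * g * b⁻¹)) ⊆
      (A.filter (fun b => Inc b e (app a e)) ∪ A.filter (fun b => Inc b e (app a f))) ∪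
      (A.filter (fun b => Inc b f (app a e)) ∪ A.filter (fun b => Inc b f (app a f))) := by
    intro b hb
    rw [Finset.mem_filter] at hb
    obtain ⟨hbA, w, hw, i1, i2⟩ := hb
    have key : ∀ c : S2 F, Inc (c * g * c⁻¹) w w → Inc c e w ∨ Inc c f w := by
      intro c hc
      have hx0 : app c⁻¹ w ≠ 0 := app_ne hw
      have hx : Inc c⁻¹ w (app c⁻¹ w) := inc_app _ _
      have hx' : Inc c (app c⁻¹ w) w := by simpa using inc_inv hx
      have hgx : Inc g (app c⁻¹ w) (app c⁻¹ w) := by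
        have e' : g = c⁻¹ * (c * g * c⁻¹) * c := by group
        rw [e']
        exact inc_mul hw hx' (inc_mul hw hc hx)
      rcases H _ hx0 hgx with h | h
      · left; exact inc_par_left hx0 h hx'
      · right; exact inc_par_left hx0 h hx'
    have fin : ∀ v u : F × F, v ≠ 0 → Inc a v w → Inc b u w → Inc b u (app a v) := by
      intro v u hv hav hbu
      exact inc_par_right hw hbu (inc_unique hv hav (inc_app a v))
    simp only [Finset.mem_union, Finset.mem_filter, hbA, true_and]
    rcases key a i1 with ha | ha <;> rcases key b i2 with hb | hb
    · exact Or.inl (Or.inl (fin _ _ he ha hb))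
    · exact Or.inr (Or.inl (fin _ _ he ha hb))
    · exact Or.inl (Or.inr (fin _ _ hf ha hb))
    · exact Or.inr (Or.inr (fin _ _ hf ha hb))
  have := hM e (app a e) he (app_ne he)
  have := hM e (app a f) he (app_ne hf)
  have := hM f (app a e) hf (app_ne he)
  have := hM f (app a f) hf (app_ne hf)
  refine (Finset.card_le_card sub).trans ?_
  refine (Finset.card_union_le _ _).trans ?_
  refine (Nat.add_le_add (Finset.card_union_le _ _) (Finset.card_union_le _ _)).trans ?_
  omega

end alg2
end GrowthSL

namespace GrowthSL
section
variable {F : Type*} [Field F]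

/-- good trace -/
def Good (g : S2 F) : Prop := tr g ≠ 0 ∧ tr g ≠ 2 ∧ tr g ≠ -2

/-- The polar form of the determinant. -/
def Tf (m : Matrix (Fin 2) (Fin 2) F) : Matrix (Fin 2) (Fin 2) F →ₗ[F] F where
  toFun x := x 1 1 * m 0 0 + x 0 0 * m 1 1 - x 0 1 * m 1 0 - x 1 0 * m 0 1
  map_add' x y := by simp only [Matrix.add_apply]; ring
  map_smul' c x := by simp only [Matrix.smul_apply, smul_eq_mul, RingHom.id_apply]; ring

lemma rank_one_inc {m : Matrix (Fin 2) (Fin 2) F} (hm : m ≠ 0)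
    (hd : m 0 0 * m 1 1 - m 0 1 * m 1 0 = 0) :
    ∃ e f : F × F, e ≠ 0 ∧ f ≠ 0 ∧ ∀ x : S2 F, Tf m x.1 = 0 → Inc x e f := by
  have tf : ∀ x : S2 F, Tf m x.1 = x.1 1 1 * m 0 0 + x.1 0 0 * m 1 1 - x.1 0 1 * m 1 0
    - x.1 1 0 * m 0 1 := fun x => rfl
  by_cases h11 : m 1 1 = 0
  · by_cases h10 : m 1 0 = 0
    · refine ⟨(m 0 1, - m 0 0), (1, 0), ?_, by simp, ?_⟩
      · intro h
        have h1 : m 0 1 = 0 := congrArg Prod.fst h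
        have h2 : - m 0 0 = 0 := congrArg Prod.snd h
        apply hm
        ext i j
        fin_cases i <;> fin_cases j
        · simpa using h2
        · exact h1
        · exact h10
        · exact h11
      · intro x hx
        rw [tf, h11, h10] at hx
        simp only [Inc]
        linear_combination hx
    · refine ⟨(m 1 1, - m 1 0), (m 0 0, m 1 0), by simp [h10], by simp [h10], ?_⟩
      intro x hx
      rw [tf] at hx
      simp only [Inc]
      linear_combination m 1 0 * hx - x.1 1 0 * hd
  · refine ⟨(m 1 1, - m 1 0), (m 0 1, m 1 1), by simp [h11], by simp [h11], ?_⟩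
    intro x hx
    rw [tf] at hx
    simp only [Inc]
    linear_combination m 1 1 * hx - x.1 1 1 * hd

lemma start (h20 : (2 : F) ≠ 0) [DecidableEq (S2 F)] {A : Finset (S2 F)} (hA : A⁻¹ = A)
    (hg : Subgroup.closure (A : Set (S2 F)) = ⊤) (hc : 81 < A.card) : ∃ g ∈ A ^ 2, Good g := by
  classical
  by_contra! hbad
  obtain ⟨b, hbA, hspan, hli⟩ := exists_linearIndependent F ((fun g : S2 F => g.1) '' (A : Set (S2 F)))
  have hbfin : b.Finite := (A.finite_toSet.image _).subset hbA
  have : Fintype b := hbfin.fintype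
  have hb4 : Fintype.card b ≤ 4 := by
    have := hli.fintype_card_le_finrank
    simpa [Module.finrank_matrix] using this
  let T : Finset F := {0, 2, -2}
  have hT : T.card ≤ 3 := Finset.card_le_three
  have htr : ∀ x ∈ A, ∀ y ∈ A, Tf y.1 x.1 ∈ T := by
    intro x hx y hy
    have h1 := hbad (x⁻¹ * y)
      (pow_mul_mem (m := 1) (n := 1) (pow_inv_mem hA (pow_one_mem hx)) (pow_one_mem hy))
    have h2 : Tf y.1 x.1 = tr (x⁻¹ * y) := by
      simp only [tr, mul00, mul11, inv00, inv01, inv10, inv11]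
      change x.1 1 1 * y.1 0 0 + x.1 0 0 * y.1 1 1 - x.1 0 1 * y.1 1 0 - x.1 1 0 * y.1 0 1 = _
      ring
    rw [h2]
    simp only [Good] at h1
    simp only [T, Finset.mem_insert, Finset.mem_singleton]
    tauto
  have hinj : Set.InjOn (fun (y : S2 F) (x : b) => Tf y.1 x.1) (A : Set (S2 F)) := by
    intro y hy y' hy' e
    by_contra hne
    set m := y.1 - y'.1 with hm
    have hm0 : m ≠ 0 := by
      intro h; apply hne; apply Subtype.ext; exact sub_eq_zero.1 h
    have hTm : ∀ x : Matrix (Fin 2) (Fin 2) F, Tf m x = Tf y.1 x - Tf y'.1 x := by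
      intro x
      change x 1 1 * m 0 0 + x 0 0 * m 1 1 - x 0 1 * m 1 0 - x 1 0 * m 0 1 =
        (x 1 1 * y.1 0 0 + x 0 0 * y.1 1 1 - x 0 1 * y.1 1 0 - x 1 0 * y.1 0 1) -
        (x 1 1 * y'.1 0 0 + x 0 0 * y'.1 1 1 - x 0 1 * y'.1 1 0 - x 1 0 * y'.1 0 1)
      simp only [hm, Matrix.sub_apply]; ring
    have hk : Submodule.span F b ≤ LinearMap.ker (Tf m) := by
      rw [Submodule.span_le]
      intro x hx
      have := congrFun e ⟨x, hx⟩
      change Tf m x = 0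
      rw [hTm]; exact sub_eq_zero.2 this
    have hAm : ∀ x ∈ A, Tf m x.1 = 0 := by
      intro x hx
      apply hk
      rw [hspan]
      exact Submodule.subset_span ⟨x, hx, rfl⟩
    have hmm : Tf m m = 0 := by
      have : Tf m m = Tf m y.1 - Tf m y'.1 := by rw [← map_sub]
      rw [this, hAm y hy, hAm y' hy', sub_zero]
    have hd : m 0 0 * m 1 1 - m 0 1 * m 1 0 = 0 := by
      have h' : m 1 1 * m 0 0 + m 0 0 * m 1 1 - m 0 1 * m 1 0 - m 1 0 * m 0 1 = 0 := hmm
      apply mul_can h20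
      linear_combination h'
    obtain ⟨e', f, he, hf, H⟩ := rank_one_inc hm0 hd
    obtain ⟨a, ha, hna⟩ := no_pair hA hg he hf
    apply hna
    refine ⟨Or.inr (H a (hAm a ha)), Or.inl ?_⟩
    have ha' : a⁻¹ ∈ A := by rw [← hA]; exact Finset.inv_mem_inv ha
    have := inc_inv (H _ (hAm _ ha'))
    rwa [inv_inv] at this
  have hle : A.card ≤ (Fintype.piFinset (fun _ : b => T)).card := by
    refine Finset.card_le_card_of_injOn _ ?_ hinj
    intro y hy
    simp only [Finset.mem_coe, Fintype.mem_piFinset]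
    intro x
    obtain ⟨g, hgA, hgx⟩ := hbA x.2
    rw [← hgx]
    exact htr g hgA y hy
  rw [Fintype.card_piFinset, Finset.prod_const, Finset.card_univ] at hle
  have : T.card ^ Fintype.card b ≤ 3 ^ 4 :=
    (Nat.pow_le_pow_left hT _).trans (Nat.pow_le_pow_right (by norm_num) hb4)
  omega

open Classical in
lemma tri_count (h20 : (2 : F) ≠ 0) [DecidableEq (S2 F)] {A : Finset (S2 F)} (hA : A⁻¹ = A) {M : ℕ}
    (hM : ∀ x y : F × F, x ≠ 0 → y ≠ 0 → (A.filter (fun a => Inc a x y)).card ≤ M)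
    {g : S2 F} (hgA : g ∈ A ^ 2) (hg : Good g) (hM16 : 16 * M ≤ A.card)
    (hD16 : 16 * ((A ^ 2).filter (fun k => k * g = g * k)).card ≤ A.card) :
    A.card ^ 3 ≤ 4 * ((A ^ 2).filter (fun k => k * g = g * k)).card ^ 3 * (A ^ 8).card ^ 2 := by
  set D := ((A ^ 2).filter (fun k => k * g = g * k)).card with hD
  obtain ⟨g0, g2, g2'⟩ := hg
  set n := A.card with hn
  let Y : S2 F → S2 F := fun a => a * g * a⁻¹
  have hYt : ∀ a, tr (Y a) = tr g := fun a => tr_conj a g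
  have hfib : ∀ y : S2 F, (A.filter (fun a => Y a = y)).card ≤ D := by
    intro y
    apply card_fix_le hA
    intro a _ b _ h1 h2
    have h3 : a * g * a⁻¹ = b * g * b⁻¹ := h1.trans h2.symm
    have : a⁻¹ * b * g = a⁻¹ * (b * g * b⁻¹) * b := by group
    rw [this, ← h3]; group
  let good : Finset (S2 F × S2 F × S2 F) := (A ×ˢ A ×ˢ A).filter (fun q =>
    ¬ Share (Y q.1) (Y q.2.1) ∧ Y q.1 ≠ Y q.2.1 ∧ Y q.1 ≠ Y q.2.2 ∧ Y q.2.1 ≠ Y q.2.2)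
  let b1 : Finset (S2 F × S2 F × S2 F) := (A ×ˢ A ×ˢ A).filter (fun q => Share (Y q.1) (Y q.2.1))
  let b2 : Finset (S2 F × S2 F × S2 F) := (A ×ˢ A ×ˢ A).filter (fun q => Y q.1 = Y q.2.1)
  let b3 : Finset (S2 F × S2 F × S2 F) := (A ×ˢ A ×ˢ A).filter (fun q => Y q.1 = Y q.2.2)
  let b4 : Finset (S2 F × S2 F × S2 F) := (A ×ˢ A ×ˢ A).filter (fun q => Y q.2.1 = Y q.2.2)
  have hb1 : b1.card ≤ (4 * M) * (A ×ˢ A).card := by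
    refine Finset.card_le_mul_card_image_of_maps_to (f := fun q => (q.1, q.2.2)) ?_ _ ?_
    · intro q hq
      simp only [b1, Finset.mem_filter, Finset.mem_product] at hq ⊢
      exact ⟨hq.1.1, hq.1.2.2⟩
    · rintro ⟨a, c⟩ _
      refine le_trans ?_ (share_count hM g2 g2' a)
      refine Finset.card_le_card_of_injOn (fun q => q.2.1) ?_ ?_
      · rintro ⟨x, y, z⟩ hq
        simp only [b1, Finset.coe_filter, Finset.mem_filter, Finset.mem_product, Set.mem_ofPred_eq,
          Prod.mk.injEq] at hq ⊢
        obtain ⟨⟨⟨h1, h2, h3⟩, h4⟩, rfl, rfl⟩ := hq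
        exact ⟨h2, h4⟩
      · rintro ⟨x, y, z⟩ hq ⟨x', y', z'⟩ hq' e
        simp only [Finset.coe_filter, Set.mem_ofPred_eq, Prod.mk.injEq] at hq hq' e ⊢
        exact ⟨hq.2.1.trans hq'.2.1.symm, e, hq.2.2.trans hq'.2.2.symm⟩
  have hb2 : b2.card ≤ D * (A ×ˢ A).card := by
    refine Finset.card_le_mul_card_image_of_maps_to (f := fun q => (q.1, q.2.2)) ?_ _ ?_
    · intro q hq
      simp only [b2, Finset.mem_filter, Finset.mem_product] at hq ⊢
      exact ⟨hq.1.1, hq.1.2.2⟩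
    · rintro ⟨a, c⟩ _
      refine le_trans ?_ (hfib (Y a))
      refine Finset.card_le_card_of_injOn (fun q => q.2.1) ?_ ?_
      · rintro ⟨x, y, z⟩ hq
        simp only [b2, Finset.coe_filter, Finset.mem_filter, Finset.mem_product, Set.mem_ofPred_eq,
          Prod.mk.injEq] at hq ⊢
        obtain ⟨⟨⟨h1, h2, h3⟩, h4⟩, rfl, rfl⟩ := hq
        exact ⟨h2, h4.symm⟩
      · rintro ⟨x, y, z⟩ hq ⟨x', y', z'⟩ hq' e
        simp only [Finset.coe_filter, Set.mem_ofPred_eq, Prod.mk.injEq] at hq hq' e ⊢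
        exact ⟨hq.2.1.trans hq'.2.1.symm, e, hq.2.2.trans hq'.2.2.symm⟩
  have hb3 : b3.card ≤ D * (A ×ˢ A).card := by
    refine Finset.card_le_mul_card_image_of_maps_to (f := fun q => (q.1, q.2.1)) ?_ _ ?_
    · intro q hq
      simp only [b3, Finset.mem_filter, Finset.mem_product] at hq ⊢
      exact ⟨hq.1.1, hq.1.2.1⟩
    · rintro ⟨a, c⟩ _
      refine le_trans ?_ (hfib (Y a))
      refine Finset.card_le_card_of_injOn (fun q => q.2.2) ?_ ?_
      · rintro ⟨x, y, z⟩ hq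
        simp only [b3, Finset.coe_filter, Finset.mem_filter, Finset.mem_product, Set.mem_ofPred_eq,
          Prod.mk.injEq] at hq ⊢
        obtain ⟨⟨⟨h1, h2, h3⟩, h4⟩, rfl, rfl⟩ := hq
        exact ⟨h3, h4.symm⟩
      · rintro ⟨x, y, z⟩ hq ⟨x', y', z'⟩ hq' e
        simp only [Finset.coe_filter, Set.mem_ofPred_eq, Prod.mk.injEq] at hq hq' e ⊢
        exact ⟨hq.2.1.trans hq'.2.1.symm, hq.2.2.trans hq'.2.2.symm, e⟩
  have hb4 : b4.card ≤ D * (A ×ˢ A).card := by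
    refine Finset.card_le_mul_card_image_of_maps_to (f := fun q => (q.1, q.2.1)) ?_ _ ?_
    · intro q hq
      simp only [b4, Finset.mem_filter, Finset.mem_product] at hq ⊢
      exact ⟨hq.1.1, hq.1.2.1⟩
    · rintro ⟨a, c⟩ _
      refine le_trans ?_ (hfib (Y c))
      refine Finset.card_le_card_of_injOn (fun q => q.2.2) ?_ ?_
      · rintro ⟨x, y, z⟩ hq
        simp only [b4, Finset.coe_filter, Finset.mem_filter, Finset.mem_product, Set.mem_ofPred_eq,
          Prod.mk.injEq] at hq ⊢
        obtain ⟨⟨⟨h1, h2, h3⟩, h4⟩, rfl, rfl⟩ := hq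
        exact ⟨h3, h4.symm⟩
      · rintro ⟨x, y, z⟩ hq ⟨x', y', z'⟩ hq' e
        simp only [Finset.coe_filter, Set.mem_ofPred_eq, Prod.mk.injEq] at hq hq' e ⊢
        exact ⟨hq.2.1.trans hq'.2.1.symm, hq.2.2.trans hq'.2.2.symm, e⟩
  have hcover : (A ×ˢ A ×ˢ A) ⊆ good ∪ ((b1 ∪ b2) ∪ (b3 ∪ b4)) := by
    intro q hq
    simp only [good, b1, b2, b3, b4, Finset.mem_union, Finset.mem_filter, hq, true_and]
    tauto
  have hcard : n ^ 3 ≤ good.card + (4 * M + 3 * D) * n ^ 2 := by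
    have h1 := Finset.card_le_card hcover
    have h2 := Finset.card_union_le good ((b1 ∪ b2) ∪ (b3 ∪ b4))
    have h3 := Finset.card_union_le (b1 ∪ b2) (b3 ∪ b4)
    have h4 := Finset.card_union_le b1 b2
    have h5 := Finset.card_union_le b3 b4
    rw [Finset.card_product] at hb1 hb2 hb3 hb4
    rw [Finset.card_product, Finset.card_product] at h1
    have e1 : n ^ 3 = n * (n * n) := by ring
    have e2 : (4 * M + 3 * D) * n ^ 2 = 4 * M * (n * n) + D * (n * n) + D * (n * n) + D * (n * n) := by
      ring
    rw [← hn] at hb1 hb2 hb3 hb4 h1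
    rw [e1, e2]
    omega
  -- upper bound for good
  let Φ : S2 F × S2 F × S2 F → S2 F × S2 F × S2 F := fun q =>
    (Y q.1, Y q.2.1 * (Y q.1)⁻¹, Y q.2.2 * (Y q.1)⁻¹)
  have hY8 : ∀ a ∈ A, ∀ b ∈ A, Y b * (Y a)⁻¹ ∈ A ^ 8 := by
    intro a ha b hb
    have hY4 : ∀ a ∈ A, Y a ∈ A ^ 4 := by
      intro a ha
      exact pow_mul_mem (m := 3) (n := 1) (pow_mul_mem (m := 1) (n := 2) (pow_one_mem ha) hgA)
        (pow_inv_mem hA (pow_one_mem ha))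
    exact pow_mul_mem (m := 4) (n := 4) (hY4 b hb) (pow_inv_mem hA (hY4 a ha))
  have hup1 : good.card ≤ D ^ 3 * (good.image Φ).card := by
    refine Finset.card_le_mul_card_image _ _ ?_
    rintro ⟨y, u, v⟩ _
    calc _ ≤ ((A.filter (fun a => Y a = y)) ×ˢ (A.filter (fun a => Y a = u * y)) ×ˢ
          (A.filter (fun a => Y a = v * y))).card := by
            apply Finset.card_le_card
            rintro ⟨a, b, c⟩ hq
            simp only [good, Φ, Finset.mem_filter, Finset.mem_product, Prod.mk.injEq] at hq ⊢
            obtain ⟨⟨⟨h1, h2, h3⟩, h4⟩, rfl, rfl, rfl⟩ := hq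
            refine ⟨⟨h1, rfl⟩, ⟨h2, ?_⟩, ⟨h3, ?_⟩⟩ <;> group
      _ ≤ D * (D * D) := by
            rw [Finset.card_product, Finset.card_product]
            exact Nat.mul_le_mul (hfib _) (Nat.mul_le_mul (hfib _) (hfib _))
      _ = D ^ 3 := by ring
  have hup2 : (good.image Φ).card ≤ 2 * ((A ^ 8) ×ˢ (A ^ 8)).card := by
    refine Finset.card_le_mul_card_image_of_maps_to (f := fun q => (q.2.1, q.2.2)) ?_ _ ?_
    · intro q hq
      rw [Finset.mem_image] at hq
      obtain ⟨⟨a, b, c⟩, hq, rfl⟩ := hq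
      simp only [good, Finset.mem_filter, Finset.mem_product] at hq
      simp only [Φ, Finset.mem_product]
      exact ⟨hY8 _ hq.1.1 _ hq.1.2.1, hY8 _ hq.1.1 _ hq.1.2.2⟩
    · rintro ⟨u, v⟩ _
      by_contra hlt
      push Not at hlt
      rw [Finset.two_lt_card] at hlt
      obtain ⟨q, hq, q', hq', q'', hq'', n1, n2, n3⟩ := hlt
      simp only [Finset.mem_filter, Finset.mem_image] at hq hq' hq''
      obtain ⟨⟨⟨a, b, c⟩, hg, rfl⟩, e⟩ := hq
      obtain ⟨⟨⟨a', b', c'⟩, hg', rfl⟩, e'⟩ := hq'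
      obtain ⟨⟨⟨a'', b'', c''⟩, hg'', rfl⟩, e''⟩ := hq''
      simp only [good, Finset.mem_filter, Finset.mem_product] at hg hg' hg''
      simp only [Φ, Prod.mk.injEq] at e e' e''
      have H := tri_main h20 g0 (hYt a) (hYt b) (hYt c) hg.2.2.1 hg.2.2.2.1 hg.2.2.2.2 hg.2.1
        (hYt a') (hYt a'')
        (by rw [e.1, ← e'.1, inv_mul_cancel_right]; exact hYt b')
        (by rw [e.1, ← e''.1, inv_mul_cancel_right]; exact hYt b'')
        (by rw [e.2, ← e'.2, inv_mul_cancel_right]; exact hYt c')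
        (by rw [e.2, ← e''.2, inv_mul_cancel_right]; exact hYt c'')
      have fin : ∀ {a b c a' b' c' : S2 F}, (Y b * (Y a)⁻¹ = u ∧ Y c * (Y a)⁻¹ = v) →
          (Y b' * (Y a')⁻¹ = u ∧ Y c' * (Y a')⁻¹ = v) → Y a = Y a' → Φ (a, b, c) = Φ (a', b', c') := by
        intro a b c a' b' c' h h' hy
        simp only [Φ, Prod.mk.injEq]
        exact ⟨hy, h.1.trans h'.1.symm, h.2.trans h'.2.symm⟩
      rcases H with H | H | H
      · exact n1 (fin e e' H)
      · exact n2 (fin e e'' H)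
      · exact n3 (fin e' e'' H)
  rw [Finset.card_product] at hup2
  have h7 : 16 * ((4 * M + 3 * D) * n ^ 2) ≤ 7 * n ^ 3 := by
    calc 16 * ((4 * M + 3 * D) * n ^ 2) = (4 * (16 * M) + 3 * (16 * D)) * n ^ 2 := by ring
      _ ≤ (4 * n + 3 * n) * n ^ 2 := Nat.mul_le_mul_right _ (by omega)
      _ = 7 * n ^ 3 := by ring
  have h8 : good.card ≤ D ^ 3 * (2 * ((A ^ 8).card * (A ^ 8).card)) :=
    hup1.trans (Nat.mul_le_mul_left _ hup2)
  have h9 : n ^ 3 ≤ 2 * good.card := by omega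
  calc n ^ 3 ≤ 2 * good.card := h9
    _ ≤ 2 * (D ^ 3 * (2 * ((A ^ 8).card * (A ^ 8).card))) := Nat.mul_le_mul_left _ h8
    _ = _ := by ring

end
end GrowthSL

namespace GrowthSL
section
variable {F : Type*} [Field F]

lemma trace_card (h20 : (2 : F) ≠ 0) {h : S2 F} (h1 : tr h ≠ 2) (h2 : tr h ≠ -2) {s : F}
    (S : Finset (S2 F)) (hc : ∀ k ∈ S, k * h = h * k) (ht : ∀ k ∈ S, tr k = s) : S.card ≤ 2 := by
  classical
  by_contra hlt
  push Not at hlt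
  obtain ⟨a, ha, b, hb, c, hc', hab, hac, hbc⟩ := Finset.two_lt_card.1 hlt
  rcases two_of_trace h20 h1 h2 (hc a ha) (hc b hb) (hc c hc') (ht a ha) (ht b hb) (ht c hc') with
    e | e | e
  · exact hab e
  · exact hac e
  · exact hbc e

lemma cent_card [Fintype F] (h20 : (2 : F) ≠ 0) {h : S2 F} (h1 : tr h ≠ 2) (h2 : tr h ≠ -2)
    (S : Finset (S2 F)) (hc : ∀ k ∈ S, k * h = h * k) : S.card ≤ 2 * Fintype.card F := by
  classical
  refine Finset.card_le_mul_card_image_of_maps_to (f := tr) (t := Finset.univ) (by simp) _ ?_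
  intro s _
  refine trace_card (s := s) h20 h1 h2 _ ?_ ?_
  · intro k hk; rw [Finset.mem_filter] at hk; exact hc k hk.1
  · intro k hk; rw [Finset.mem_filter] at hk; exact hk.2

lemma bad_card (h20 : (2 : F) ≠ 0) {h : S2 F} (h1 : tr h ≠ 2) (h2 : tr h ≠ -2)
    (S : Finset (S2 F)) (hc : ∀ k ∈ S, k * h = h * k) (hb : ∀ k ∈ S, ¬ Good k) : S.card ≤ 6 := by
  classical
  have h3 : ({0, 2, -2} : Finset F).card ≤ 3 := Finset.card_le_three
  have : S.card ≤ 2 * ({0, 2, -2} : Finset F).card := by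
    refine Finset.card_le_mul_card_image_of_maps_to (f := tr) ?_ _ ?_
    · intro k hk
      have := hb k hk
      simp only [Good] at this
      simp only [Finset.mem_insert, Finset.mem_singleton]
      tauto
    · intro s _
      refine trace_card (s := s) h20 h1 h2 _ ?_ ?_
      · intro k hk; rw [Finset.mem_filter] at hk; exact hc k hk.1
      · intro k hk; rw [Finset.mem_filter] at hk; exact hk.2
  omega

lemma conj_comm_iff {G : Type*} [Group G] (x g h : G) :
    (x⁻¹ * h * x) * g = g * (x⁻¹ * h * x) ↔ h * (x * g * x⁻¹) = (x * g * x⁻¹) * h := by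
  constructor
  · intro e
    have := congrArg (fun t => x * t * x⁻¹) e
    simpa [mul_assoc] using this
  · intro e
    have := congrArg (fun t => x⁻¹ * t * x) e
    simpa [mul_assoc] using this

open Classical in
lemma pivot [Fintype F] [Fintype (S2 F)] (h20 : (2 : F) ≠ 0) [DecidableEq (S2 F)]
    {A : Finset (S2 F)} (hA : A⁻¹ = A)
    (hg : Subgroup.closure (A : Set (S2 F)) = ⊤) (hc : 81 < A.card) (D : ℕ)
    (hD : ∀ h ∈ A ^ 2, Good h → D ≤ ((A ^ 2).filter (fun k => k * h = h * k)).card) :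
    A.card * D ≤ 6 * (A ^ 4).card ∨
    Fintype.card (S2 F) * (D - 6) ≤ (A ^ 2).card * (4 * Fintype.card F) := by
  obtain ⟨g0, hg0A, hg0⟩ := start h20 hA hg hc
  by_cases hQ : ∀ x : S2 F, ∃ h ∈ A ^ 2, Good h ∧ h * (x * g0 * x⁻¹) = (x * g0 * x⁻¹) * h
  · right
    refine Finset.card_mul_le_card_mul (s := Finset.univ) (t := A ^ 2)
      (fun x h => Good h ∧ h * (x * g0 * x⁻¹) = (x * g0 * x⁻¹) * h) ?_ ?_
    · intro x _
      obtain ⟨h, hhA, hhG, hhc⟩ := hQ x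
      have hT := hD h hhA hhG
      have hsub : (A ^ 2).filter (fun k => k * h = h * k) ⊆
          (A ^ 2).bipartiteAbove (fun x h => Good h ∧ h * (x * g0 * x⁻¹) = (x * g0 * x⁻¹) * h) x ∪
          (A ^ 2).filter (fun k => k * h = h * k ∧ ¬ Good k) := by
        intro k hk
        simp only [Finset.bipartiteAbove, Finset.mem_union, Finset.mem_filter] at hk ⊢
        by_cases hkG : Good k
        · left
          refine ⟨hk.1, hkG, ?_⟩
          exact comm_trans hhG.2.1 hhG.2.2 hk.2 hhc.symm
        · right; exact ⟨hk.1, hk.2, hkG⟩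
      have h1 := Finset.card_le_card hsub
      have h2 := Finset.card_union_le ((A ^ 2).bipartiteAbove
        (fun x h => Good h ∧ h * (x * g0 * x⁻¹) = (x * g0 * x⁻¹) * h) x)
          ((A ^ 2).filter (fun k => k * h = h * k ∧ ¬ Good k))
      have h3 : ((A ^ 2).filter (fun k => k * h = h * k ∧ ¬ Good k)).card ≤ 6 := by
        refine bad_card h20 hhG.2.1 hhG.2.2 _ ?_ ?_
        · intro k hk; rw [Finset.mem_filter] at hk; exact hk.2.1
        · intro k hk; rw [Finset.mem_filter] at hk; exact hk.2.2
      omega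
    · intro h _
      by_cases hhG : Good h
      · set S := (Finset.univ : Finset (S2 F)).bipartiteBelow
          (fun x h => Good h ∧ h * (x * g0 * x⁻¹) = (x * g0 * x⁻¹) * h) h with hS
        have h1 : S.card ≤ (2 * Fintype.card F) * (S.image (fun x => x * g0 * x⁻¹)).card := by
          refine Finset.card_le_mul_card_image _ _ ?_
          intro y hy
          rw [Finset.mem_image] at hy
          obtain ⟨x0, _, rfl⟩ := hy
          refine le_trans ?_ (cent_card h20 hg0.2.1 hg0.2.2
            (Finset.univ.filter (fun k => k * g0 = g0 * k)) (by simp))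
          refine Finset.card_le_card_of_injOn (fun x => x0⁻¹ * x) ?_ ?_
          · intro x hx
            simp only [Finset.coe_filter, Set.mem_ofPred_eq, Finset.mem_univ, true_and] at hx ⊢
            have : x0⁻¹ * x * g0 = x0⁻¹ * (x * g0 * x⁻¹) * x := by group
            rw [this, hx.2]; group
          · intro x _ x' _ e
            exact mul_left_cancel e
        have h2 : (S.image (fun x => x * g0 * x⁻¹)).card ≤ 2 := by
          refine trace_card (s := tr g0) h20 hhG.2.1 hhG.2.2 _ ?_ ?_
          · intro k hk
            rw [Finset.mem_image] at hk
            obtain ⟨x, hx, rfl⟩ := hk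
            simp only [hS, Finset.bipartiteBelow, Finset.mem_filter] at hx
            exact hx.2.2.symm
          · intro k hk
            rw [Finset.mem_image] at hk
            obtain ⟨x, hx, rfl⟩ := hk
            exact tr_conj x g0
        calc S.card ≤ _ := h1
          _ ≤ (2 * Fintype.card F) * 2 := Nat.mul_le_mul_left _ h2
          _ = _ := by ring
      · have : (Finset.univ : Finset (S2 F)).bipartiteBelow
          (fun x h => Good h ∧ h * (x * g0 * x⁻¹) = (x * g0 * x⁻¹) * h) h = ∅ := by
          simp [Finset.bipartiteBelow, hhG]
        rw [this]; simp
  · left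
    have : ∃ a ∈ A, ∃ x : S2 F, (∃ h ∈ A ^ 2, Good h ∧ h * (x * g0 * x⁻¹) = (x * g0 * x⁻¹) * h) ∧
        ¬ (∃ h ∈ A ^ 2, Good h ∧ h * ((a * x) * g0 * (a * x)⁻¹) = ((a * x) * g0 * (a * x)⁻¹) * h) := by
      by_contra hcon
      apply hQ
      refine gen_ind hA hg ?_ ?_
      · exact ⟨g0, hg0A, hg0, by group⟩
      · intro a ha x hx
        by_contra hn
        exact hcon ⟨a, ha, x, hx, hn⟩
    obtain ⟨a, ha, x, ⟨h, hhA, hhG, hhc⟩, hno⟩ := this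
    have hT := hD h hhA hhG
    set Y := (A ^ 2).filter (fun k => k * h = h * k) with hY
    have hta : tr (a * h * a⁻¹) = tr h := tr_conj a h
    have hE6 : ((A ^ 2).filter (fun k => k * (a * h * a⁻¹) = (a * h * a⁻¹) * k)).card ≤ 6 := by
      refine bad_card (h := a * h * a⁻¹) h20 (by rw [hta]; exact hhG.2.1) (by rw [hta]; exact hhG.2.2)
        _ ?_ ?_
      · intro k hk; rw [Finset.mem_filter] at hk; exact hk.2
      · intro k hk hkG
        rw [Finset.mem_filter] at hk
        apply hno
        refine ⟨k, hk.1, hkG, ?_⟩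
        refine comm_trans (h := a * h * a⁻¹) (by rw [hta]; exact hhG.2.1) (by rw [hta]; exact hhG.2.2)
          hk.2 ?_
        have := congrArg (fun t => a * t * a⁻¹) hhc
        simp only [mul_inv_rev, mul_assoc, inv_mul_cancel_left] at this ⊢
        exact this.symm
    have hpc : A.card * Y.card ≤
        ((A ^ 2).filter (fun k => k * (a * h * a⁻¹) = (a * h * a⁻¹) * k)).card * (A ^ 4).card := by
      refine prod_count A Y _ _ a ?_ ?_
      · intro u hu u' hu' y hy y' hy' e
        rw [Finset.mem_filter]
        refine ⟨pow_mul_mem (m := 1) (n := 1) (pow_inv_mem hA (pow_one_mem hu')) (pow_one_mem hu), ?_⟩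
        rw [hY, Finset.mem_filter] at hy hy'
        have e1 : u'⁻¹ * u = a * (y' * y⁻¹) * a⁻¹ := by
          have : u = u' * a * y' * y⁻¹ * a⁻¹ := by rw [← e]; group
          rw [this]; group
        have c1 : Commute y h := hy.2
        have c2 : Commute y' h := hy'.2
        have c3 : (y' * y⁻¹) * h = h * (y' * y⁻¹) := (c2.mul_left c1.inv_left)
        rw [e1]
        have := congrArg (fun t => a * t * a⁻¹) c3
        simp only [mul_assoc, inv_mul_cancel_left] at this ⊢
        exact this
      · intro u hu y hy
        rw [hY, Finset.mem_filter] at hy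
        exact pow_mul_mem (m := 2) (n := 2) (pow_mul_mem (m := 1) (n := 1) (pow_one_mem hu)
          (pow_one_mem ha)) hy.1
    calc A.card * D ≤ A.card * Y.card := Nat.mul_le_mul_left _ hT
      _ ≤ _ := hpc
      _ ≤ _ := Nat.mul_le_mul_right _ hE6

lemma card_upper [Fintype F] [Fintype (S2 F)] : Fintype.card (S2 F) ≤ Fintype.card F ^ 3 := by
  classical
  have : Fintype.card F ^ 3 = Fintype.card (F × F × F) := by
    rw [Fintype.card_prod, Fintype.card_prod]; ring
  rw [this]
  refine Fintype.card_le_of_injective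
    (fun g => (g.1 0 0, g.1 0 1, if g.1 0 0 = 0 then g.1 1 1 else g.1 1 0)) ?_
  intro g h e
  simp only [Prod.mk.injEq] at e
  obtain ⟨e1, e2, e3⟩ := e
  have dg := det1 g
  have dh := det1 h
  rw [← e1] at e3
  by_cases h0 : g.1 0 0 = 0
  · simp only [h0, if_true] at e3
    refine ext4 e1 e2 ?_ e3
    rw [← e1, ← e2, h0] at dh
    rw [h0] at dg
    have hne : g.1 0 1 ≠ 0 := by
      intro h'; rw [h'] at dg; simp at dg
    refine sub_eq_zero.1 (mul_can hne ?_)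
    linear_combination dh - dg
  · simp only [h0, if_false] at e3
    refine ext4 e1 e2 e3 ?_
    rw [← e1, ← e2, ← e3] at dh
    refine sub_eq_zero.1 (mul_can h0 ?_)
    linear_combination dg - dh

lemma card_lower [Fintype F] [Fintype (S2 F)] :
    (Fintype.card F - 1) * Fintype.card F ^ 2 ≤ Fintype.card (S2 F) := by
  classical
  have : (Fintype.card F - 1) * Fintype.card F ^ 2 = Fintype.card (Fˣ × F × F) := by
    rw [Fintype.card_prod, Fintype.card_prod, Fintype.card_units]; ring
  rw [this]
  refine Fintype.card_le_of_injective
    (fun q => (⟨!![(q.1 : F), q.2.1; q.2.2, (1 + q.2.1 * q.2.2) / (q.1 : F)], ?_⟩ : S2 F)) ?_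
  · rw [Matrix.det_fin_two_of]
    have := q.1.ne_zero
    field_simp; ring
  · rintro ⟨a, b, c⟩ ⟨a', b', c'⟩ e
    have h1 := congrArg (fun g : S2 F => g.1 0 0) e
    have h2 := congrArg (fun g : S2 F => g.1 0 1) e
    have h3 := congrArg (fun g : S2 F => g.1 1 0) e
    simp at h1 h2 h3
    have h1 := Units.ext h1
    subst h1 h2 h3; rfl
end
end GrowthSL

namespace GrowthSL
section
set_option linter.unusedSectionVars false
variable {G : Type*} [Group G] [Fintype G]

/-- left convolution by `f`. -/
noncomputable def cv (f : G → ℂ) : EuclideanSpace ℂ G →ₗ[ℂ] EuclideanSpace ℂ G where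
  toFun φ := WithLp.toLp 2 (fun x => ∑ y, f (x * y⁻¹) * φ y)
  map_add' φ ψ := by
    ext x; simp [mul_add, Finset.sum_add_distrib]
  map_smul' c φ := by
    ext x
    simp only [PiLp.smul_apply, smul_eq_mul, RingHom.id_apply, Finset.mul_sum]
    exact Finset.sum_congr rfl fun y _ => by ring

lemma cv_apply (f : G → ℂ) (φ : EuclideanSpace ℂ G) (x : G) :
    cv f φ x = ∑ y, f (x * y⁻¹) * φ y := rfl

/-- right translation. -/
noncomputable def Rt (g : G) : EuclideanSpace ℂ G →ₗ[ℂ] EuclideanSpace ℂ G where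
  toFun φ := WithLp.toLp 2 (fun x => φ (x * g))
  map_add' φ ψ := by ext x; simp
  map_smul' c φ := by ext x; simp

lemma Rt_apply (g : G) (φ : EuclideanSpace ℂ G) (x : G) : Rt g φ x = φ (x * g) := rfl

lemma Rt_mul (g h : G) (φ : EuclideanSpace ℂ G) : Rt (g * h) φ = Rt g (Rt h φ) := by
  ext x; simp only [Rt_apply, mul_assoc]

lemma Rt_one (φ : EuclideanSpace ℂ G) : Rt 1 φ = φ := by
  ext x; simp only [Rt_apply, mul_one]

lemma Rt_inner (g : G) (φ ψ : EuclideanSpace ℂ G) : inner ℂ (Rt g φ) (Rt g ψ) = inner ℂ φ ψ := by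
  rw [PiLp.inner_apply, PiLp.inner_apply]
  simp only [Rt_apply]
  exact Equiv.sum_comp (Equiv.mulRight g) (fun x => inner ℂ (φ x) (ψ x))

lemma Rt_norm (g : G) (φ : EuclideanSpace ℂ G) : ‖Rt g φ‖ = ‖φ‖ := by
  have := Rt_inner g φ φ
  rw [inner_self_eq_norm_sq_to_K, inner_self_eq_norm_sq_to_K] at this
  have h2 : ‖Rt g φ‖ ^ 2 = ‖φ‖ ^ 2 := by exact_mod_cast this
  exact (sq_eq_sq₀ (norm_nonneg _) (norm_nonneg _)).1 h2

lemma Rt_cv (f : G → ℂ) (g : G) (φ : EuclideanSpace ℂ G) : Rt g (cv f φ) = cv f (Rt g φ) := by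
  ext x
  simp only [Rt_apply, cv_apply]
  rw [← Equiv.sum_comp (Equiv.mulRight g)]
  refine Finset.sum_congr rfl fun y _ => ?_
  simp [mul_assoc]

lemma Rt_inner' (g : G) (φ ψ : EuclideanSpace ℂ G) :
    inner ℂ φ (Rt g ψ) = inner ℂ (Rt g⁻¹ φ) ψ := by
  rw [← Rt_inner g⁻¹ φ, ← Rt_mul, inv_mul_cancel, Rt_one]

/-- The positive operator. -/
noncomputable def TT (f : G → ℂ) : EuclideanSpace ℂ G →ₗ[ℂ] EuclideanSpace ℂ G :=
  LinearMap.adjoint (cv f) ∘ₗ cv f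

lemma TT_inner (f : G → ℂ) (φ ψ : EuclideanSpace ℂ G) :
    inner ℂ φ (TT f ψ) = inner ℂ (cv f φ) (cv f ψ) := by
  rw [TT, LinearMap.comp_apply, LinearMap.adjoint_inner_right]

lemma Rt_TT (f : G → ℂ) (g : G) (φ : EuclideanSpace ℂ G) : Rt g (TT f φ) = TT f (Rt g φ) := by
  refine ext_inner_left ℂ fun ψ => ?_
  rw [Rt_inner', TT_inner, TT_inner, ← Rt_cv, ← Rt_cv, Rt_inner']

lemma sum_bound (f : G → ℂ) {ι : Type*} [Fintype ι] {e : ι → EuclideanSpace ℂ G}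
    (he : Orthonormal ℂ e) {l : ℝ} (hl : ∀ i, ‖cv f (e i)‖ ^ 2 = l) :
    (Fintype.card ι : ℝ) * l ≤ Fintype.card G * ∑ z, ‖f z‖ ^ 2 := by
  have h1 : (Fintype.card ι : ℝ) * l = ∑ i, ‖cv f (e i)‖ ^ 2 := by
    simp [hl]
  rw [h1]
  simp only [EuclideanSpace.norm_sq_eq]
  rw [Finset.sum_comm]
  have h2 : (Fintype.card G : ℝ) * ∑ z, ‖f z‖ ^ 2 = ∑ _x : G, ∑ z, ‖f z‖ ^ 2 := by simp
  rw [h2]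
  refine Finset.sum_le_sum fun x _ => ?_
  let w : EuclideanSpace ℂ G := WithLp.toLp 2 (fun y => star (f (x * y⁻¹)))
  have h3 := he.sum_inner_products_le w (s := Finset.univ)
  have h4 : ‖w‖ ^ 2 = ∑ z, ‖f z‖ ^ 2 := by
    rw [EuclideanSpace.norm_sq_eq]
    simp only [w, norm_star]
    exact Equiv.sum_comp ((Equiv.inv G).trans (Equiv.mulLeft x)) (fun z => ‖f z‖ ^ 2)
  rw [← h4]
  refine le_trans (le_of_eq ?_) h3
  refine Finset.sum_congr rfl fun i _ => ?_
  rw [← norm_inner_symm, cv_apply, PiLp.inner_apply]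
  congr 2
  refine Finset.sum_congr rfl fun y _ => ?_
  simp [w, mul_comm]

lemma ortho_of_eig {r : EuclideanSpace ℂ G →ₗ[ℂ] EuclideanSpace ℂ G}
    (hr : ∀ φ ψ, inner ℂ (r φ) (r ψ) = inner ℂ φ ψ) {a b : ℂ} (ha : ‖a‖ = 1) (hab : a ≠ b)
    {v w : EuclideanSpace ℂ G} (hv : r v = a • v) (hw : r w = b • w) : inner ℂ v w = 0 := by
  have h := hr v w
  rw [hv, hw, inner_smul_left, inner_smul_right] at h
  have h2 : (starRingEnd ℂ a * b - 1) * inner ℂ v w = 0 := by linear_combination h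
  rcases mul_eq_zero.1 h2 with h3 | h3
  · exfalso
    apply hab
    have h4 : a * starRingEnd ℂ a = 1 := by
      rw [Complex.mul_conj, Complex.normSq_eq_norm_sq, ha]; simp
    linear_combination b * h4 - a * h3
  · exact h3

lemma op_bound (f : G → ℂ) {B : ℝ}
    (hB : ∀ (l : ℝ) (v : EuclideanSpace ℂ G), v ≠ 0 → TT f v = (l : ℂ) • v → l ≤ B)
    (φ : EuclideanSpace ℂ G) : ‖cv f φ‖ ^ 2 ≤ B * ‖φ‖ ^ 2 := by
  have hs : (TT f).IsSymmetric := LinearMap.isSymmetric_adjoint_comp_self (cv f)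
  let b := hs.eigenvectorBasis rfl
  let ev := hs.eigenvalues rfl
  have hev : ∀ i, TT f (b i) = (ev i : ℂ) • b i := fun i => hs.apply_eigenvectorBasis rfl i
  have hle : ∀ i, ev i ≤ B := fun i =>
    hB _ (b i) (b.orthonormal.ne_zero i) (hev i)
  have h1 : (inner ℂ φ (TT f φ) : ℂ) = ((∑ i, ev i * ‖inner ℂ (b i) φ‖ ^ 2 : ℝ) : ℂ) := by
    rw [← b.sum_inner_mul_inner]
    push_cast
    refine Finset.sum_congr rfl fun i _ => ?_
    rw [← hs (b i) φ, hev i, inner_smul_left, Complex.conj_ofReal]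
    have : (inner ℂ φ (b i) : ℂ) * inner ℂ (b i) φ = ((‖inner ℂ (b i) φ‖ : ℝ) : ℂ) ^ 2 := by
      rw [← inner_conj_symm φ (b i), mul_comm, Complex.mul_conj, Complex.normSq_eq_norm_sq]
      push_cast; rfl
    linear_combination (ev i : ℂ) * this
  rw [TT_inner, inner_self_eq_norm_sq_to_K] at h1
  have h2 : ‖cv f φ‖ ^ 2 = ∑ i, ev i * ‖inner ℂ (b i) φ‖ ^ 2 := by
    apply Complex.ofReal_injective
    rw [← h1]; push_cast; rfl
  rw [h2, ← b.sum_sq_norm_inner_right φ, Finset.mul_sum]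
  exact Finset.sum_le_sum fun i _ => mul_le_mul_of_nonneg_right (hle i) (by positivity)
end
end GrowthSL

namespace GrowthSL
section
variable {F : Type*} [Field F]

/-- upper unipotent -/
def uu (s : F) : S2 F := ⟨!![1, s; 0, 1], by rw [Matrix.det_fin_two_of]; ring⟩
/-- lower unipotent -/
def ll (s : F) : S2 F := ⟨!![1, 0; s, 1], by rw [Matrix.det_fin_two_of]; ring⟩
/-- Weyl element -/
def ww : S2 F := ⟨!![0, 1; -1, 0], by rw [Matrix.det_fin_two_of]; ring⟩
/-- torus -/
def dd (b : Fˣ) : S2 F := ⟨!![((b⁻¹ : Fˣ) : F), 0; 0, (b : F)], by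
  rw [Matrix.det_fin_two_of]; simp⟩

lemma uu_add (s t : F) : uu (s + t) = uu s * uu t := by
  apply ext4 <;> simp only [mul00, mul01, mul10, mul11] <;> simp [uu, add_comm]

lemma uu_zero : uu (0 : F) = 1 := by
  apply ext4 <;> simp [uu]

lemma ll_eq (s : F) : ll s = ww * uu (-s) * ww⁻¹ := by
  apply ext4 <;> simp only [mul00, mul01, mul10, mul11, inv00, inv01, inv10, inv11] <;> simp [uu, ll, ww]

lemma uu_dd (b : Fˣ) : uu 1 * dd b = dd b * uu ((b : F) * b) := by
  apply ext4 <;> simp only [mul00, mul01, mul10, mul11] <;> simp [uu, dd]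

lemma gen_unip {P : S2 F → Prop} (hu : ∀ s, P (uu s)) (hl : ∀ s, P (ll s))
    (hm : ∀ g h, P g → P h → P (g * h)) (g : S2 F) : P g := by
  have key : ∀ g : S2 F, g.1 1 0 ≠ 0 → P g := by
    intro g hc
    have dg := det1 g
    have : g = uu ((g.1 0 0 - 1) / g.1 1 0) * ll (g.1 1 0) * uu ((g.1 1 1 - 1) / g.1 1 0) := by
      apply ext4 <;> simp only [mul00, mul01, mul10, mul11] <;> simp [uu, ll] <;> field_simp
      · ring
      · linear_combination -dg
      · ring
    rw [this]
    exact hm _ _ (hm _ _ (hu _) (hl _)) (hu _)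
  by_cases hc : g.1 1 0 = 0
  · have dg := det1 g
    have hd : g.1 1 1 ≠ 0 := by
      intro h; rw [h, hc] at dg; simp at dg
    have h1 : P (g * ll 1) := by
      apply key
      rw [mul10]; simp [ll, hc, hd]
    have : g = g * ll 1 * ll (-1) := by
      apply ext4 <;> simp only [mul00, mul01, mul10, mul11] <;> simp [ll]
    rw [this]
    exact hm _ _ h1 (hl _)
  · exact key g hc
end

section
variable {p : ℕ} [Fact p.Prime]

lemma uu_pow (m : ℕ) : (uu (1 : ZMod p)) ^ m = uu (m : ZMod p) := by
  induction m with
  | zero => simp [uu_zero]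
  | succ k ih => rw [pow_succ, ih, ← uu_add]; push_cast; rfl

lemma uu_val (t : ZMod p) : uu t = (uu (1 : ZMod p)) ^ t.val := by
  rw [uu_pow, ZMod.natCast_zmod_val]

lemma Rt_pow {G : Type*} [Group G] [Fintype G] {g : G} {z : EuclideanSpace ℂ G} {m : ℂ}
    (h : Rt g z = m • z) (k : ℕ) : Rt (g ^ k) z = m ^ k • z := by
  induction k with
  | zero => simp [Rt_one]
  | succ k ih => rw [pow_succ, Rt_mul, h, map_smul, ih, smul_smul, pow_succ, mul_comm]

lemma Rt_fix_pow {G : Type*} [Group G] [Fintype G] {g : G} {z : EuclideanSpace ℂ G}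
    (h : Rt g z = z) (k : ℕ) : Rt (g ^ k) z = z := by
  have := Rt_pow (m := 1) (by simpa using h) k
  simpa using this

/-- some eigenvector in the eigenspace is moved by the unipotent -/
lemma exists_moved (f : S2 (ZMod p) → ℂ) (hf : ∑ z, f z = 0) {l : ℝ} (hl : l ≠ 0)
    {v : EuclideanSpace ℂ (S2 (ZMod p))} (hv : v ≠ 0) (hT : TT f v = (l : ℂ) • v) :
    ∃ w, TT f w = (l : ℂ) • w ∧ Rt (uu 1) w ≠ w := by
  by_contra! hall
  have hE : ∀ g w, TT f w = (l : ℂ) • w → TT f (Rt g w) = (l : ℂ) • Rt g w := by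
    intro g w hw
    rw [← Rt_TT, hw, map_smul]
  have hu : ∀ s w, TT f w = (l : ℂ) • w → Rt (uu s) w = w := by
    intro s w hw
    rw [uu_val]
    exact Rt_fix_pow (hall w hw) _
  have hfix : ∀ g : S2 (ZMod p), ∀ w, TT f w = (l : ℂ) • w → Rt g w = w := by
    refine gen_unip hu ?_ ?_
    · intro s w hw
      rw [ll_eq, Rt_mul, Rt_mul, hu _ _ (hE _ _ hw), ← Rt_mul, mul_inv_cancel, Rt_one]
    · intro g h hg hh w hw
      rw [Rt_mul, hh w hw, hg w hw]
  have hconst : ∀ x, v x = v 1 := by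
    intro x
    have := congrArg (fun φ : EuclideanSpace ℂ (S2 (ZMod p)) => φ 1) (hfix x v hT)
    simpa [Rt_apply] using this
  have h0 : cv f v = 0 := by
    ext x
    rw [cv_apply]
    simp only [hconst]
    rw [← Finset.sum_mul]
    have : ∑ y, f (x * y⁻¹) = ∑ z, f z :=
      Equiv.sum_comp ((Equiv.inv _).trans (Equiv.mulLeft x)) f
    rw [this, hf]; simp
  have h1 : TT f v = 0 := by rw [TT, LinearMap.comp_apply, h0, map_zero]
  rw [h1] at hT
  rcases smul_eq_zero.1 hT.symm with h | h
  · exact hl (by exact_mod_cast h)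
  · exact hv h

lemma exists_eig (f : S2 (ZMod p) → ℂ) {l : ℝ} {w : EuclideanSpace ℂ (S2 (ZMod p))}
    (hT : TT f w = (l : ℂ) • w) (hw : Rt (uu 1) w ≠ w) :
    ∃ z, z ≠ 0 ∧ TT f z = (l : ℂ) • z ∧ ∃ m : ℂ, m ≠ 1 ∧ m ^ p = 1 ∧ Rt (uu 1) z = m • z := by
  let R : EuclideanSpace ℂ (S2 (ZMod p)) →ₗ[ℂ] EuclideanSpace ℂ (S2 (ZMod p)) := Rt (uu 1)
  let E := Module.End.eigenspace (TT f) (l : ℂ)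
  let E' := E.map (R - 1)
  have hRE : ∀ x ∈ E, R x ∈ E := by
    intro x hx
    rw [Module.End.mem_eigenspace_iff] at hx ⊢
    rw [← Rt_TT, hx, map_smul]
  have hE'E : E' ≤ E := by
    rintro _ ⟨x, hx, rfl⟩
    exact E.sub_mem (hRE x hx) hx
  have hRE' : ∀ x ∈ E', R x ∈ E' := by
    rintro _ ⟨x, hx, rfl⟩
    refine ⟨R x, hRE x hx, ?_⟩
    simp
  have hwE : w ∈ E := by rw [Module.End.mem_eigenspace_iff]; exact hT
  have : Nontrivial E' := by
    refine ⟨⟨(R - 1) w, w, hwE, rfl⟩, 0, ?_⟩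
    intro h
    have h' : (R - 1) w = 0 := congrArg Subtype.val h
    apply hw
    have : R w - w = 0 := h'
    exact sub_eq_zero.1 this
  obtain ⟨m, hm⟩ := Module.End.exists_eigenvalue (R.restrict hRE')
  obtain ⟨z, hz⟩ := hm.exists_hasEigenvector
  have hz1 : R z.1 = m • z.1 := congrArg Subtype.val hz.apply_eq_smul
  have hz0 : z.1 ≠ 0 := fun h => hz.2 (Subtype.ext h)
  have hup : (uu (1 : ZMod p)) ^ p = 1 := by rw [uu_pow]; simp [uu_zero]
  refine ⟨z.1, hz0, Module.End.mem_eigenspace_iff.1 (hE'E z.2), m, ?_, ?_, hz1⟩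
  · rintro rfl
    rw [one_smul] at hz1
    obtain ⟨x, hx, hxz⟩ := z.2
    have hx1 : R x = x + z.1 := by
      have : R x - x = z.1 := hxz
      rw [← this]; abel
    have hk : ∀ k : ℕ, Rt ((uu (1 : ZMod p)) ^ k) x = x + (k : ℂ) • z.1 := by
      intro k
      induction k with
      | zero => simp [Rt_one]
      | succ k ih =>
        rw [pow_succ', Rt_mul, ih, map_add, map_smul]
        change R x + (k : ℂ) • R z.1 = _
        rw [hx1, hz1]; push_cast; rw [add_smul, one_smul]; abel
    have := hk p
    rw [hup, Rt_one] at this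
    have h2 : (p : ℂ) • z.1 = 0 := by
      have := this.symm
      rwa [add_eq_left] at this
    rcases smul_eq_zero.1 h2 with h | h
    · exact (Fact.out : p.Prime).ne_zero (by exact_mod_cast h)
    · exact hz0 h
  · have := Rt_pow hz1 p
    rw [hup, Rt_one] at this
    have h2 : (m ^ p - 1) • z.1 = 0 := by rw [sub_smul, one_smul, ← this, sub_self]
    rcases smul_eq_zero.1 h2 with h | h
    · exact sub_eq_zero.1 h
    · exact absurd h hz0

lemma sq_card : p ≤ 2 * Fintype.card {t : ZMod p // ∃ b : (ZMod p)ˣ, (b : ZMod p) * b = t} + 1 := by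
  classical
  let q : (ZMod p)ˣ → {t : ZMod p // ∃ b : (ZMod p)ˣ, (b : ZMod p) * b = t} :=
    fun b => ⟨(b : ZMod p) * b, b, rfl⟩
  have h1 : (Finset.univ : Finset (ZMod p)ˣ).card ≤ 2 * (Finset.univ : Finset
      {t : ZMod p // ∃ b : (ZMod p)ˣ, (b : ZMod p) * b = t}).card := by
    refine Finset.card_le_mul_card_image_of_maps_to (f := q) (by simp) _ ?_
    rintro ⟨t, b, rfl⟩ _
    refine le_trans (Finset.card_le_card (t := {b, -b}) ?_) Finset.card_le_two
    intro c hc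
    simp only [q, Finset.mem_filter, Finset.mem_univ, true_and, Subtype.mk.injEq] at hc
    rcases mul_self_eq_mul_self_iff.1 hc with h | h
    · simp [Units.ext h]
    · have : c = -b := Units.ext (by simpa using h)
      simp [this]
  rw [Finset.card_univ, Finset.card_univ, ZMod.card_units] at h1
  omega

lemma eig_bound (f : S2 (ZMod p) → ℂ) (hf : ∑ z, f z = 0) {l : ℝ}
    {v : EuclideanSpace ℂ (S2 (ZMod p))} (hv : v ≠ 0) (hT : TT f v = (l : ℂ) • v) :
    l * ((p : ℝ) - 1) ≤ 2 * (Fintype.card (S2 (ZMod p)) * ∑ z, ‖f z‖ ^ 2) := by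
  classical
  by_cases hl : l = 0
  · rw [hl, zero_mul]; positivity
  obtain ⟨w, hwT, hw⟩ := exists_moved f hf hl hv hT
  obtain ⟨z, hz0, hzT, m, hm1, hmp, hz⟩ := exists_eig f hwT hw
  have hprim : IsPrimitiveRoot m p := by
    have := orderOf_eq_prime hmp hm1
    rw [← this]; exact IsPrimitiveRoot.orderOf m
  have hnm : ‖m‖ = 1 := Complex.norm_eq_one_of_pow_eq_one hmp (Fact.out : p.Prime).ne_zero
  let ι := {t : ZMod p // ∃ b : (ZMod p)ˣ, (b : ZMod p) * b = t}
  let z1 : EuclideanSpace ℂ (S2 (ZMod p)) := ((‖z‖ : ℂ)⁻¹) • z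
  have hz1n : ‖z1‖ = 1 := norm_smul_inv_norm hz0
  have hz1R : Rt (uu 1) z1 = m • z1 := by
    simp only [z1]; rw [map_smul, hz, smul_comm]
  have hz1T : TT f z1 = (l : ℂ) • z1 := by
    simp only [z1]; rw [map_smul, hzT, smul_comm]
  let e : ι → EuclideanSpace ℂ (S2 (ZMod p)) := fun t => Rt (dd (Classical.choose t.2)) z1
  have heR : ∀ t : ι, Rt (uu 1) (e t) = m ^ (t.1.val) • e t := by
    intro t
    simp only [e]
    rw [← Rt_mul, uu_dd, Classical.choose_spec t.2, Rt_mul, uu_val, Rt_pow hz1R, map_smul]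
  have hnl : l = ‖cv f z1‖ ^ 2 := by
    have h := TT_inner f z1 z1
    rw [hz1T, inner_smul_right, inner_self_eq_norm_sq_to_K, inner_self_eq_norm_sq_to_K, hz1n] at h
    apply Complex.ofReal_injective
    push_cast
    simpa using h
  have horth : Orthonormal ℂ e := by
    refine ⟨fun t => by simp only [e]; rw [Rt_norm, hz1n], ?_⟩
    intro s t hst
    refine ortho_of_eig (Rt_inner (uu 1)) (by rw [norm_pow, hnm, one_pow]) ?_ (heR s) (heR t)
    intro h
    apply hst
    have := hprim.pow_inj (ZMod.val_lt _) (ZMod.val_lt _) h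
    exact Subtype.ext (ZMod.val_injective p this)
  have hb := sum_bound f horth (l := l) (by
    intro t
    simp only [e]
    rw [← Rt_cv, Rt_norm, hnl])
  have hc : (p : ℝ) ≤ 2 * (Fintype.card ι : ℝ) + 1 := by exact_mod_cast sq_card (p := p)
  have hl0 : 0 ≤ l := by rw [hnl]; positivity
  nlinarith

lemma mixing (f : S2 (ZMod p) → ℂ) (hf : ∑ z, f z = 0) (φ : EuclideanSpace ℂ (S2 (ZMod p))) :
    ‖cv f φ‖ ^ 2 * ((p : ℝ) - 1) ≤
      2 * (Fintype.card (S2 (ZMod p)) * ∑ z, ‖f z‖ ^ 2) * ‖φ‖ ^ 2 := by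
  have hp : (0 : ℝ) < (p : ℝ) - 1 := by
    have : (1 : ℝ) < p := by exact_mod_cast (Fact.out : p.Prime).one_lt
    linarith
  have := op_bound f (B := 2 * (Fintype.card (S2 (ZMod p)) * ∑ z, ‖f z‖ ^ 2) / ((p : ℝ) - 1)) (by
    intro l v hv hT
    rw [le_div_iff₀ hp]
    exact eig_bound f hf hv hT) φ
  rw [div_mul_eq_mul_div, le_div_iff₀ hp] at this
  exact this
end
end GrowthSL

namespace GrowthSL
section
variable {p : ℕ} [Fact p.Prime]

/-- number of representations as a product -/
def rep [DecidableEq (S2 (ZMod p))] (A : Finset (S2 (ZMod p))) (x : S2 (ZMod p)) : ℕ :=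
  (A.filter (fun y => x * y⁻¹ ∈ A)).card

lemma rep_var [DecidableEq (S2 (ZMod p))] (A : Finset (S2 (ZMod p))) :
    (∑ x, ((rep A x : ℝ) - (A.card : ℝ) ^ 2 / Fintype.card (S2 (ZMod p))) ^ 2) * ((p : ℝ) - 1) ≤
      2 * Fintype.card (S2 (ZMod p)) * (A.card : ℝ) ^ 2 := by
  set N : ℝ := (Fintype.card (S2 (ZMod p)) : ℝ) with hN
  set n : ℝ := (A.card : ℝ) with hn
  have hN0 : 0 < N := by rw [hN]; exact_mod_cast Fintype.card_pos
  let f0 : S2 (ZMod p) → ℝ := fun z => (if z ∈ A then 1 else 0) - n / N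
  let f : S2 (ZMod p) → ℂ := fun z => (f0 z : ℂ)
  let φ : EuclideanSpace ℂ (S2 (ZMod p)) := WithLp.toLp 2 (fun z => if z ∈ A then (1 : ℂ) else 0)
  have hf0 : ∑ z, f0 z = 0 := by
    simp only [f0, Finset.sum_sub_distrib, Finset.sum_boole, Finset.sum_const, Finset.card_univ,
      nsmul_eq_mul, Finset.filter_univ_mem]
    rw [← hn, ← hN]; field_simp; simp
  have hf : ∑ z, f z = 0 := by
    simp only [f]; rw [← Complex.ofReal_sum, hf0]; simp
  have hf2 : ∑ z, ‖f z‖ ^ 2 ≤ n := by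
    have h1 : ∀ z, ‖f z‖ ^ 2 = (if z ∈ A then 1 else 0) - (n / N) * (if z ∈ A then 1 else 0)
        - (n / N) * f0 z := by
      intro z
      simp only [f, Complex.norm_real, Real.norm_eq_abs, sq_abs, f0]
      split_ifs <;> ring
    simp only [h1]
    rw [Finset.sum_sub_distrib, Finset.sum_sub_distrib, ← Finset.mul_sum, ← Finset.mul_sum, hf0]
    simp only [Finset.sum_boole, Finset.filter_univ_mem]
    rw [← hn]
    have : 0 ≤ n / N * n := by positivity
    linarith
  have hφ : ‖φ‖ ^ 2 = n := by
    rw [EuclideanSpace.norm_sq_eq]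
    have : ∀ z, ‖φ z‖ ^ 2 = if z ∈ A then (1 : ℝ) else 0 := by
      intro z; simp only [φ]; split_ifs <;> simp
    simp only [this, Finset.sum_boole, Finset.filter_univ_mem]
    rfl
  have hcv : ∀ x, cv f φ x = (((rep A x : ℝ) - n ^ 2 / N : ℝ) : ℂ) := by
    intro x
    have : cv f φ x = ((∑ y ∈ A, f0 (x * y⁻¹) : ℝ) : ℂ) := by
      rw [cv_apply, Complex.ofReal_sum, ← Finset.sum_filter_add_sum_filter_not Finset.univ (· ∈ A)]
      simp only [Finset.filter_univ_mem]
      have e2 : ∑ y with y ∉ A, f (x * y⁻¹) * φ y = 0 := by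
        apply Finset.sum_eq_zero
        intro y hy
        rw [Finset.mem_filter] at hy
        simp [φ, hy.2]
      rw [e2, add_zero]
      refine Finset.sum_congr rfl fun y hy => ?_
      simp [φ, hy, f]
    rw [this]
    congr 1
    simp only [f0, Finset.sum_sub_distrib, Finset.sum_boole, Finset.sum_const, nsmul_eq_mul, rep]
    rw [← hn]; ring
  have hm := mixing f hf φ
  have hl : ‖cv f φ‖ ^ 2 = ∑ x, ((rep A x : ℝ) - n ^ 2 / N) ^ 2 := by
    rw [EuclideanSpace.norm_sq_eq]
    refine Finset.sum_congr rfl fun x _ => ?_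
    rw [hcv, Complex.norm_real, Real.norm_eq_abs, sq_abs]
  rw [hl, hφ] at hm
  refine hm.trans ?_
  have : 0 ≤ n := by positivity
  have h3 : N * ∑ z, ‖f z‖ ^ 2 ≤ N * n := mul_le_mul_of_nonneg_left hf2 hN0.le
  calc 2 * (N * ∑ z, ‖f z‖ ^ 2) * n ≤ 2 * (N * n) * n := by gcongr
    _ = 2 * N * n ^ 2 := by ring

lemma gowers_i [DecidableEq (S2 (ZMod p))] {A : Finset (S2 (ZMod p))} {g : S2 (ZMod p)}
    (hg : g ∉ A ^ 3) (hA0 : 0 < A.card) :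
    (A.card : ℝ) ^ 3 * ((p : ℝ) - 1) ≤ 2 * (Fintype.card (S2 (ZMod p)) : ℝ) ^ 3 := by
  have hv := rep_var A
  set N : ℝ := (Fintype.card (S2 (ZMod p)) : ℝ) with hN
  set n : ℝ := (A.card : ℝ) with hn
  have hN0 : 0 < N := by rw [hN]; exact_mod_cast Fintype.card_pos
  have hn0 : 0 < n := by rw [hn]; exact_mod_cast hA0
  have hp : (0 : ℝ) < (p : ℝ) - 1 := by
    have : (1 : ℝ) < p := by exact_mod_cast (Fact.out : p.Prime).one_lt
    linarith
  have h1 : n * (n ^ 2 / N) ^ 2 ≤ ∑ x, ((rep A x : ℝ) - n ^ 2 / N) ^ 2 := by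
    calc n * (n ^ 2 / N) ^ 2 = ∑ x ∈ A.image (fun a => g * a⁻¹), ((rep A x : ℝ) - n ^ 2 / N) ^ 2 := by
          rw [Finset.sum_image (by intro a _ b _ e; exact inv_injective (mul_left_cancel e))]
          rw [Finset.sum_congr rfl (g := fun _ => (n ^ 2 / N) ^ 2)]
          · simp [hn]
          · intro a ha
            have : rep A (g * a⁻¹) = 0 := by
              rw [rep, Finset.card_eq_zero, Finset.filter_eq_empty_iff]
              intro y hy hb
              apply hg
              have : g = (g * a⁻¹ * y⁻¹) * y * a := by group
              rw [this, pow_succ, pow_two]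
              exact Finset.mul_mem_mul (Finset.mul_mem_mul hb hy) ha
            rw [this]; push_cast; ring
      _ ≤ _ := Finset.sum_le_sum_of_subset_of_nonneg (Finset.subset_univ _)
          (fun _ _ _ => sq_nonneg _)
  have h2 : n * (n ^ 2 / N) ^ 2 * ((p : ℝ) - 1) ≤ 2 * N * n ^ 2 :=
    (mul_le_mul_of_nonneg_right h1 hp.le).trans hv
  have h3 : n * (n ^ 2 / N) ^ 2 * ((p : ℝ) - 1) = n ^ 2 * (n ^ 3 * ((p : ℝ) - 1)) / N ^ 2 := by
    field_simp
  rw [h3, div_le_iff₀ (by positivity)] at h2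
  have h4 : n ^ 2 * (n ^ 3 * ((p : ℝ) - 1)) ≤ n ^ 2 * (2 * N ^ 3) := by
    refine h2.trans (le_of_eq ?_); ring
  exact le_of_mul_le_mul_left h4 (by positivity)

lemma gowers_ii [DecidableEq (S2 (ZMod p))] {A : Finset (S2 (ZMod p))} (hA0 : 0 < A.card) :
    (A.card : ℝ) ^ 2 * ((p : ℝ) - 1) * Fintype.card (S2 (ZMod p)) ≤
      ((A ^ 2).card : ℝ) * (2 * (Fintype.card (S2 (ZMod p)) : ℝ) ^ 2 +
        (A.card : ℝ) ^ 2 * ((p : ℝ) - 1)) := by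
  have hv := rep_var A
  set N : ℝ := (Fintype.card (S2 (ZMod p)) : ℝ) with hN
  set n : ℝ := (A.card : ℝ) with hn
  have hN0 : 0 < N := by rw [hN]; exact_mod_cast Fintype.card_pos
  have hn0 : 0 < n := by rw [hn]; exact_mod_cast hA0
  have hp : (0 : ℝ) < (p : ℝ) - 1 := by
    have : (1 : ℝ) < p := by exact_mod_cast (Fact.out : p.Prime).one_lt
    linarith
  have hsum : ∑ x, (rep A x : ℝ) = n ^ 2 := by
    have h1 : ∀ x, (rep A x : ℝ) = ∑ y ∈ A, if x * y⁻¹ ∈ A then (1 : ℝ) else 0 := by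
      intro x; rw [rep, Finset.sum_boole]
    simp only [h1]
    rw [Finset.sum_comm]
    have h2 : ∀ y : S2 (ZMod p), ∑ x, (if x * y⁻¹ ∈ A then (1 : ℝ) else 0) = n := by
      intro y
      refine (Equiv.sum_comp (Equiv.mulRight y⁻¹) (fun x => if x ∈ A then (1 : ℝ) else 0)).trans ?_
      simp [hn]
    simp only [h2]
    simp [hn]; ring
  have hsupp : ∀ x, x ∉ A ^ 2 → (rep A x : ℝ) = 0 := by
    intro x hx
    have : rep A x = 0 := by
      rw [rep, Finset.card_eq_zero, Finset.filter_eq_empty_iff]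
      intro y hy hb
      apply hx
      have : x = (x * y⁻¹) * y := by group
      rw [this, pow_two]
      exact Finset.mul_mem_mul hb hy
    rw [this]; simp
  have hcs : n ^ 4 ≤ ((A ^ 2).card : ℝ) * ∑ x, (rep A x : ℝ) ^ 2 := by
    have h1 : ∑ x ∈ A ^ 2, (rep A x : ℝ) = n ^ 2 := by
      rw [← hsum]
      exact Finset.sum_subset (Finset.subset_univ _) (fun x _ hx => hsupp x hx)
    have h2 := sq_sum_le_card_mul_sum_sq (s := A ^ 2) (f := fun x => (rep A x : ℝ))
    rw [h1] at h2
    calc n ^ 4 = (n ^ 2) ^ 2 := by ring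
      _ ≤ _ := h2
      _ ≤ _ := by
        refine mul_le_mul_of_nonneg_left ?_ (by positivity)
        exact Finset.sum_le_sum_of_subset_of_nonneg (Finset.subset_univ _)
          (fun _ _ _ => sq_nonneg _)
  have hvar : ∑ x, (rep A x : ℝ) ^ 2 = ∑ x, ((rep A x : ℝ) - n ^ 2 / N) ^ 2 + n ^ 4 / N := by
    have h1 : ∀ x, ((rep A x : ℝ) - n ^ 2 / N) ^ 2 =
        (rep A x : ℝ) ^ 2 - 2 * (n ^ 2 / N) * (rep A x : ℝ) + (n ^ 2 / N) ^ 2 := by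
      intro x; ring
    simp only [h1]
    rw [Finset.sum_add_distrib, Finset.sum_sub_distrib, ← Finset.mul_sum, hsum]
    simp only [Finset.sum_const, Finset.card_univ, nsmul_eq_mul]
    rw [← hN]; field_simp; ring
  rw [hvar] at hcs
  set V := ∑ x, ((rep A x : ℝ) - n ^ 2 / N) ^ 2
  have hS0 : (0 : ℝ) ≤ ((A ^ 2).card : ℝ) := by positivity
  have h5 : n ^ 4 * (((p : ℝ) - 1) * N) ≤
      ((A ^ 2).card : ℝ) * (2 * N * n ^ 2 * N + n ^ 4 * ((p : ℝ) - 1)) := by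
    calc n ^ 4 * (((p : ℝ) - 1) * N) ≤ ((A ^ 2).card : ℝ) * (V + n ^ 4 / N) * (((p : ℝ) - 1) * N) := by
          gcongr
      _ = ((A ^ 2).card : ℝ) * (V * ((p : ℝ) - 1) * N + n ^ 4 * ((p : ℝ) - 1)) := by
          field_simp
      _ ≤ _ := by gcongr
  have h6 : n ^ 2 * (n ^ 2 * ((p : ℝ) - 1) * N) ≤
      n ^ 2 * (((A ^ 2).card : ℝ) * (2 * N ^ 2 + n ^ 2 * ((p : ℝ) - 1))) := by
    linarith
  exact le_of_mul_le_mul_left h6 (by positivity)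
end
end GrowthSL

namespace GrowthSL

lemma numerics {n K p N D : ℝ} (hK : 1 ≤ K) (hn : 2 ^ 40 * K ^ 20 ≤ n) (hp : 2 ≤ p)
    (hN1 : (p - 1) * p ^ 2 ≤ N) (hN2 : N ≤ p ^ 3) (hD0 : 0 ≤ D) {S2 : ℝ} (hS2 : S2 ≤ K * n)
    (hD : n ≤ 4 * D ^ 3 * K ^ 12)
    (hpiv : D ≤ 6 * K ^ 2 ∨ N * (D - 6) ≤ S2 * (4 * p))
    (hg1 : n ^ 3 * (p - 1) ≤ 2 * N ^ 3)
    (hg2 : n ^ 2 * (p - 1) * N ≤ S2 * (2 * N ^ 2 + n ^ 2 * (p - 1))) : False := by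
  have hK0 : 0 < K := by linarith
  have kp : ∀ m : ℕ, m ≤ 20 → K ^ m ≤ K ^ 20 := fun m hm => pow_le_pow_right₀ hK hm
  have h20 : (1 : ℝ) ≤ K ^ 20 := one_le_pow₀ hK
  have hn0 : 0 < n := by nlinarith
  have hNp : p ^ 3 ≤ 2 * N := by nlinarith [sq_nonneg p]
  have hp3 : 0 < p ^ 3 := by positivity
  have hN0 : 0 < N := by linarith
  rcases hpiv with ha | hb
  · have h1 : D ^ 3 ≤ (6 * K ^ 2) ^ 3 := pow_le_pow_left₀ hD0 ha 3
    have h2 : 4 * D ^ 3 * K ^ 12 ≤ 4 * (6 * K ^ 2) ^ 3 * K ^ 12 := by gcongr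
    have h3 : 4 * (6 * K ^ 2) ^ 3 * K ^ 12 = 864 * K ^ 18 := by ring
    have := kp 18 (by norm_num)
    nlinarith
  · have hD12 : 12 ≤ D := by
      by_contra hlt
      push Not at hlt
      have h1 : D ^ 3 ≤ 12 ^ 3 := pow_le_pow_left₀ hD0 hlt.le 3
      have h2 : 4 * D ^ 3 * K ^ 12 ≤ 4 * 12 ^ 3 * K ^ 12 := by gcongr
      have := kp 12 (by norm_num)
      nlinarith
    -- p^2 D ≤ 16 K n
    have hpD : p ^ 2 * D ≤ 16 * K * n := by
      have h1 : N * D ≤ 2 * (N * (D - 6)) := by nlinarith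
      have h2 : p ^ 3 * D ≤ 2 * (N * D) := by nlinarith
      have h3 : S2 * (4 * p) ≤ K * n * (4 * p) := by gcongr
      have h4 : p * (p ^ 2 * D) ≤ p * (16 * K * n) := by nlinarith
      exact le_of_mul_le_mul_left h4 (by linarith)
    have hp6 : p ^ 6 ≤ 16384 * K ^ 15 * n ^ 2 := by
      have h1 : (p ^ 2 * D) ^ 3 ≤ (16 * K * n) ^ 3 := pow_le_pow_left₀ (by positivity) hpD 3
      have h2 : n * p ^ 6 ≤ n * (16384 * K ^ 15 * n ^ 2) := by
        calc n * p ^ 6 ≤ 4 * D ^ 3 * K ^ 12 * p ^ 6 := by gcongr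
          _ = 4 * K ^ 12 * (p ^ 2 * D) ^ 3 := by ring
          _ ≤ 4 * K ^ 12 * (16 * K * n) ^ 3 := by gcongr
          _ = _ := by ring
      exact le_of_mul_le_mul_left h2 hn0
    have hn3 : n ^ 3 ≤ 4 * p ^ 8 := by
      have h1 : N ^ 3 ≤ (p ^ 3) ^ 3 := pow_le_pow_left₀ hN0.le hN2 3
      have h2 : p * n ^ 3 ≤ p * (4 * p ^ 8) := by
        have : 0 < n ^ 3 := by positivity
        nlinarith
      exact le_of_mul_le_mul_left h2 (by linarith)
    have hX0 : 0 ≤ 2 * N ^ 2 + n ^ 2 * (p - 1) := by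
      have : 0 ≤ p - 1 := by linarith
      positivity
    have hg3 : n ^ 2 * (p - 1) * N ≤ K * n * (2 * N ^ 2 + n ^ 2 * (p - 1)) :=
      hg2.trans (mul_le_mul_of_nonneg_right hS2 hX0)
    rcases le_total (2 * N ^ 2) (n ^ 2 * (p - 1)) with hc | hc
    · have h1 : n ^ 2 * (p - 1) * N ≤ n ^ 2 * (p - 1) * (2 * K * n) := by
        refine hg3.trans ?_
        have : K * n * (2 * N ^ 2 + n ^ 2 * (p - 1)) ≤ K * n * (n ^ 2 * (p - 1) + n ^ 2 * (p - 1)) := by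
          gcongr
        linarith
      have hpos : 0 < n ^ 2 * (p - 1) := by
        have : 0 < p - 1 := by linarith
        positivity
      have h2 : N ≤ 2 * K * n := le_of_mul_le_mul_left h1 hpos
      have h3 : p ^ 3 ≤ 4 * K * n := by linarith
      have h4 : (n ^ 3) ^ 3 ≤ (4 * p ^ 8) ^ 3 := pow_le_pow_left₀ (by positivity) hn3 3
      have h5 : (p ^ 3) ^ 8 ≤ (4 * K * n) ^ 8 := pow_le_pow_left₀ (by positivity) h3 8
      have h6 : n ^ 8 * n ≤ n ^ 8 * (4194304 * K ^ 8) := by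
        calc n ^ 8 * n = (n ^ 3) ^ 3 := by ring
          _ ≤ _ := h4
          _ = 64 * (p ^ 3) ^ 8 := by ring
          _ ≤ 64 * (4 * K * n) ^ 8 := by gcongr
          _ = _ := by ring
      have h7 := le_of_mul_le_mul_left h6 (by positivity)
      have := kp 8 (by norm_num)
      nlinarith
    · have h1 : (n * N) * (n * (p - 1)) ≤ (n * N) * (4 * K * N) := by
        have : K * n * (2 * N ^ 2 + n ^ 2 * (p - 1)) ≤ K * n * (2 * N ^ 2 + 2 * N ^ 2) := by
          gcongr
        linarith
      have h2 := le_of_mul_le_mul_left h1 (by positivity)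
      have h3 : 4 * K * N ≤ 4 * K * p ^ 3 := by gcongr
      have h4 : p * n ≤ p * (8 * K * p ^ 2) := by nlinarith
      have h5 := le_of_mul_le_mul_left h4 (by linarith)
      have h6 : n ^ 3 ≤ (8 * K * p ^ 2) ^ 3 := pow_le_pow_left₀ hn0.le h5 3
      have h7 : n ^ 2 * n ≤ n ^ 2 * (8388608 * K ^ 18) := by
        calc n ^ 2 * n = n ^ 3 := by ring
          _ ≤ _ := h6
          _ = 512 * K ^ 3 * p ^ 6 := by ring
          _ ≤ 512 * K ^ 3 * (16384 * K ^ 15 * n ^ 2) := by gcongr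
          _ = _ := by ring
      have h8 := le_of_mul_le_mul_left h7 (by positivity)
      have := kp 18 (by norm_num)
      nlinarith

open Classical in
lemma main_aux {p : ℕ} [Fact p.Prime] [DecidableEq (S2 (ZMod p))] {A : Finset (S2 (ZMod p))} (hA : A⁻¹ = A)
    (hg : Subgroup.closure (A : Set (S2 (ZMod p))) = ⊤) {g : S2 (ZMod p)} (hgA : g ∉ A ^ 3)
    (hA0 : 0 < A.card) {K : ℝ} (hK : 1 ≤ K) (hK3 : ((A ^ 3).card : ℝ) = K * A.card)
    (hn : 2 ^ 40 * K ^ 20 ≤ (A.card : ℝ)) : False := by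
  have hAne : A.Nonempty := Finset.card_pos.1 hA0
  have hpw : ∀ m, 3 ≤ m → ((A ^ m).card : ℝ) ≤ K ^ (m - 2) * A.card := fun m hm =>
    Finset.small_pow_of_small_tripling hm hK3.le hA
  have hS2 : ((A ^ 2).card : ℝ) ≤ K * A.card := by
    rw [← hK3]
    exact_mod_cast Finset.card_pow_mono (s := A) (by norm_num) (by norm_num)
  have h20 : (1 : ℝ) ≤ K ^ 20 := one_le_pow₀ hK
  have kp : ∀ m : ℕ, m ≤ 20 → K ^ m ≤ K ^ 20 := fun m hm => pow_le_pow_right₀ hK hm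
  have hnbig : (2 : ℝ) ^ 40 ≤ A.card := by nlinarith
  have hnbigN : 2 ^ 40 ≤ A.card := by exact_mod_cast hnbig
  have hNup := card_upper (F := ZMod p)
  have hNlow := card_lower (F := ZMod p)
  have hAN : A.card ≤ Fintype.card (S2 (ZMod p)) := Finset.card_le_univ A
  rw [ZMod.card] at hNup hNlow
  have hp2 : p ≠ 2 := by
    rintro rfl
    have : (2 : ℕ) ^ 40 ≤ 2 ^ 3 := hnbigN.trans (hAN.trans hNup)
    norm_num at this
  have hpp : p.Prime := Fact.out
  have h2ne : (2 : ZMod p) ≠ 0 := by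
    intro h
    have : ((2 : ℕ) : ZMod p) = 0 := by exact_mod_cast h
    rw [ZMod.natCast_eq_zero_iff] at this
    exact hp2 ((Nat.prime_dvd_prime_iff_eq hpp Nat.prime_two).1 this)
  have hn0 : (0 : ℝ) < A.card := by exact_mod_cast hA0
  -- Borel
  have hM : ∀ x y : ZMod p × ZMod p, x ≠ 0 → y ≠ 0 →
      (A.filter (fun a => Inc a x y)).card ≤ A.card / 16 := by
    intro x y hx hy
    rw [Nat.le_div_iff_mul_le (by norm_num)]
    by_contra hlt
    push Not at hlt
    have hb := borel_bound hA hg hx hy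
    set c := (A.filter (fun a => Inc a x y)).card
    have hbR : (c : ℝ) ^ 4 ≤ ((A ^ 5).card : ℝ) ^ 2 * (2 * (A ^ 9).card) := by exact_mod_cast hb
    have h5 := hpw 5 (by norm_num)
    have h9 := hpw 9 (by norm_num)
    norm_num at h5 h9
    have h1 : (c : ℝ) ^ 4 ≤ (K ^ 3 * A.card) ^ 2 * (2 * (K ^ 7 * A.card)) := by
      refine hbR.trans ?_
      gcongr
    have hltR : (A.card : ℝ) ≤ c * 16 := by exact_mod_cast hlt.le
    have h2 : (A.card : ℝ) ^ 4 ≤ (c * 16) ^ 4 := pow_le_pow_left₀ hn0.le hltR 4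
    have h3 : (A.card : ℝ) ^ 3 * A.card ≤ (A.card : ℝ) ^ 3 * (131072 * K ^ 13) := by
      calc (A.card : ℝ) ^ 3 * A.card = (A.card : ℝ) ^ 4 := by ring
        _ ≤ _ := h2
        _ = 65536 * (c : ℝ) ^ 4 := by ring
        _ ≤ 65536 * ((K ^ 3 * A.card) ^ 2 * (2 * (K ^ 7 * A.card))) := by gcongr
        _ = _ := by ring
    have h4 := le_of_mul_le_mul_left h3 (by positivity)
    have := kp 13 (by norm_num)
    nlinarith
  obtain ⟨g0, hg0A, hg0⟩ := start h2ne hA hg (by omega)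
  obtain ⟨h, hh, hmin⟩ := Finset.exists_min_image ((A ^ 2).filter Good)
    (fun h => ((A ^ 2).filter (fun k => k * h = h * k)).card)
    ⟨g0, by rw [Finset.mem_filter]; exact ⟨hg0A, hg0⟩⟩
  rw [Finset.mem_filter] at hh
  set D := ((A ^ 2).filter (fun k => k * h = h * k)).card with hDdef
  have hDbound : A.card ^ 3 ≤ 4 * D ^ 3 * (A ^ 8).card ^ 2 := by
    by_cases h16 : 16 * D ≤ A.card
    · exact tri_count h2ne hA hM hh.1 hh.2 (Nat.mul_div_le _ _) h16
    · push Not at h16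
      have h8 : A.card ≤ (A ^ 8).card := by
        have := Finset.card_pow_mono (s := A) (by norm_num) (m := 1) (n := 8) (by norm_num)
        rwa [pow_one] at this
      have h81 : 4096 ≤ (A ^ 8).card ^ 2 := by nlinarith
      calc A.card ^ 3 ≤ (16 * D) ^ 3 := Nat.pow_le_pow_left h16.le 3
        _ = D ^ 3 * 4096 := by ring
        _ ≤ D ^ 3 * (A ^ 8).card ^ 2 := Nat.mul_le_mul_left _ h81
        _ ≤ 4 * (D ^ 3 * (A ^ 8).card ^ 2) := by omega
        _ = _ := by ring
  have hDR : (A.card : ℝ) ≤ 4 * (D : ℝ) ^ 3 * K ^ 12 := by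
    have h1 : (A.card : ℝ) ^ 3 ≤ 4 * (D : ℝ) ^ 3 * ((A ^ 8).card : ℝ) ^ 2 := by
      exact_mod_cast hDbound
    have h8 := hpw 8 (by norm_num)
    norm_num at h8
    have h2 : (A.card : ℝ) ^ 2 * A.card ≤ (A.card : ℝ) ^ 2 * (4 * (D : ℝ) ^ 3 * K ^ 12) := by
      calc (A.card : ℝ) ^ 2 * A.card = (A.card : ℝ) ^ 3 := by ring
        _ ≤ _ := h1
        _ ≤ 4 * (D : ℝ) ^ 3 * (K ^ 6 * A.card) ^ 2 := by gcongr
        _ = _ := by ring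
    exact le_of_mul_le_mul_left h2 (by positivity)
  have hpivot := pivot h2ne hA hg (by omega) D (by
    intro k hk hkG
    exact hmin k (by rw [Finset.mem_filter]; exact ⟨hk, hkG⟩))
  have hp1 : 1 ≤ p := hpp.one_lt.le
  have hpR : (2 : ℝ) ≤ p := by exact_mod_cast hpp.two_le
  refine numerics (n := A.card) (K := K) (p := p) (N := Fintype.card (S2 (ZMod p))) (D := D)
    (S2 := (A ^ 2).card) hK hn hpR ?_ (by exact_mod_cast hNup) (by positivity) hS2 hDR ?_
    (gowers_i hgA hA0) (gowers_ii hA0)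
  · have : (((p - 1) * p ^ 2 : ℕ) : ℝ) ≤ Fintype.card (S2 (ZMod p)) := by exact_mod_cast hNlow
    rw [Nat.cast_mul, Nat.cast_sub hp1] at this
    push_cast at this
    exact this
  · rcases hpivot with h1 | h1
    · left
      have h1R : (A.card : ℝ) * D ≤ 6 * (A ^ 4).card := by exact_mod_cast h1
      have h4 := hpw 4 (by norm_num)
      norm_num at h4
      have h2 : (A.card : ℝ) * D ≤ A.card * (6 * K ^ 2) := by linarith
      exact le_of_mul_le_mul_left h2 hn0
    · right
      rw [ZMod.card] at h1
      have h1R : (Fintype.card (S2 (ZMod p)) : ℝ) * ((D - 6 : ℕ) : ℝ) ≤ (A ^ 2).card * (4 * p) := by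
        exact_mod_cast h1
      refine le_trans ?_ h1R
      refine mul_le_mul_of_nonneg_left ?_ (by positivity)
      have : (D : ℝ) ≤ ((D - 6 : ℕ) : ℝ) + 6 := by exact_mod_cast (by omega : D ≤ D - 6 + 6)
      linarith
end GrowthSL

/-- **Theorem 1.2** (growth in SL₂(F_p)): there are absolute constants `C₀, c > 0` such
that for every prime `p` and every finite symmetric generating set `A` of `SL₂(F_p)`
with `|A| ≥ C₀`, either `A³ = SL₂(F_p)` or `|A³| ≥ c·|A|^{1 + 1/20}`. -/
theorem growth_in_SL2 :
    ∃ C₀ c : ℝ, 0 < C₀ ∧ 0 < c ∧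
      ∀ (p : ℕ), p.Prime →
        ∀ A : Finset (Matrix.SpecialLinearGroup (Fin 2) (ZMod p)),
          A⁻¹ = A →
          Subgroup.closure (A : Set (Matrix.SpecialLinearGroup (Fin 2) (ZMod p))) = ⊤ →
          C₀ ≤ (A.card : ℝ) →
          (((A ^ 3 : Finset (Matrix.SpecialLinearGroup (Fin 2) (ZMod p))) :
              Set (Matrix.SpecialLinearGroup (Fin 2) (ZMod p))) = Set.univ ∨
            c * (A.card : ℝ) ^ ((1 : ℝ) + 1 / 20) ≤ ((A ^ 3).card : ℝ)) := by
  refine ⟨1, 1 / 4, by norm_num, by norm_num, ?_⟩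
  intro p hp A hA hg hc
  have : Fact p.Prime := ⟨hp⟩
  by_contra hcon
  push Not at hcon
  obtain ⟨hne, hlt⟩ := hcon
  have hn0 : (0 : ℝ) < A.card := by linarith
  have hA0 : 0 < A.card := by exact_mod_cast hn0
  obtain ⟨g, hgA⟩ := (Set.ne_univ_iff_exists_notMem _).1 hne
  have hgA' : g ∉ A ^ 3 := fun h => hgA (Finset.mem_coe.2 h)
  have h3 : A.card ≤ (A ^ 3).card := by
    have := Finset.card_pow_mono (s := A) (by norm_num) (m := 1) (n := 3) (by norm_num)
    rwa [pow_one] at this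
  have h3R : (A.card : ℝ) ≤ (A ^ 3).card := by exact_mod_cast h3
  have hK3 : ((A ^ 3).card : ℝ) = ((A ^ 3).card / A.card : ℝ) * A.card := by field_simp
  refine GrowthSL.main_aux hA hg hgA' hA0 (K := ((A ^ 3).card / A.card : ℝ)) ?_ hK3 ?_
  · rw [le_div_iff₀ hn0]; linarith
  · set K : ℝ := ((A ^ 3).card / A.card : ℝ)
    rw [hK3, Real.rpow_add hn0, Real.rpow_one] at hlt
    set r : ℝ := (A.card : ℝ) ^ ((1 : ℝ) / 20) with hr
    have h1 : (4 * K) * A.card ≤ r * A.card := by linarith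
    have h2 : 4 * K ≤ r := le_of_mul_le_mul_right h1 hn0
    have hK0 : 0 ≤ K := div_nonneg (Nat.cast_nonneg _) (Nat.cast_nonneg _)
    have h4 : (4 * K) ^ 20 ≤ r ^ 20 := pow_le_pow_left₀ (mul_nonneg (by norm_num) hK0) h2 20
    have h5 : r ^ 20 = A.card := by
      rw [hr, ← Real.rpow_natCast, ← Real.rpow_mul hn0.le]; norm_num
    rw [h5] at h4
    calc (2 : ℝ) ^ 40 * K ^ 20 = (4 * K) ^ 20 := by ring
      _ ≤ _ := h4
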